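/- Let k be a field, G a finite group, T an indeterminate, L a finite Galois extension of the rational function field k(T), and α : G → Gal(L/k(T)) a surjective group homomorphism admitting a group-theoretic section (i.e., there is an injective homomorphism α' : Gal(L/k(T)) → G with α ∘ α' = id). Then there exist a finite separable extension E of k(T) with L ⊆ E such that every element of E algebraic over k lies in L (i.e., E ∩ k̄ = L ∩ k̄), and an isomorphism β : Aut(E/k(T)) → G such that every σ ∈ Aut(E/k(T)) maps L onto itself and σ|_L = α(β(σ)). -/

import Mathlib

set_option synthInstance.maxHeartbeats 1000000
set_option maxHeartbeats 1000000

/-!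
Write `K = k(T)`. First, `L` is enlarged to `Ω`, its compositum with the splitting field of a
trinomial whose Galois group is the full symmetric group, even over the compositum of `L` with the
algebraic closure of `k`; Cayley's theorem then gives an embedding `ψ : G → Gal(Ω/K)` with
`ψ(g)|_L = α(g)`.

Next, let `H` be a proper subgroup of `Gal(Ω/K)`; for the whole group, `Ω` itself is the extension
sought. A generator `c` of the fixed field of `H` is separated from its other conjugates by its
value at a suitable place unramified in `Ω`. This yields `d ∈ K(c)`, whose value at the place is
nonzero while its images under the automorphisms moving `c` vanish there, and a uniformizer
`g ∈ k[T]`. The cubic `X ^ 3 - d X ^ 2 + g` has exactly one root `θ` that is a Laurent series at the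
place, whereas the conjugate cubics are Eisenstein there and have no such root. Hence an
automorphism of `Ω(θ)` over `K` fixes both `c` and `θ`, and restriction to `Ω` identifies
`Aut(Ω(θ)/K)` with `H`. For `H = ψ(G)` this is the required extension.
-/

open Polynomial hiding constantCoeff
open PowerSeries (constantCoeff)
open scoped IntermediateField PowerSeries

section Polynomial

theorem dvd_eval_scaleRoots_sub_pow {R : Type*} [CommRing R] {q : R[X]} (hq : q.Monic)
    (D y : R) : D ∣ (q.scaleRoots D).eval y - y ^ q.natDegree := by
  nontriviality R
  by_cases hD : IsUnit D
  · exact hD.dvd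
  have : Nontrivial (R ⧸ Ideal.span {D}) :=
    Ideal.Quotient.nontrivial_iff.2 (Ideal.span_singleton_eq_top.not.2 hD)
  rw [← Ideal.mem_span_singleton, ← Ideal.Quotient.eq, ← eval₂_at_apply, ← eval_map,
    map_scaleRoots _ _ _ (by simp [hq.leadingCoeff]),
    Ideal.Quotient.eq_zero_iff_mem.2 (Ideal.mem_span_singleton_self D), scaleRoots_zero,
    (hq.map _).leadingCoeff, hq.natDegree_map]
  simp

theorem derivative_scaleRoots {R : Type*} [CommRing R] (q : R[X]) (s : R) :
    derivative (q.scaleRoots s) =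
      C (s ^ (q.natDegree - 1 - (derivative q).natDegree)) * (derivative q).scaleRoots s := by
  ext i
  rw [coeff_C_mul, coeff_scaleRoots, coeff_derivative, coeff_scaleRoots]
  rcases lt_or_ge (derivative q).natDegree i with hi | hi
  · have h0 := coeff_eq_zero_of_natDegree_lt hi
    rw [h0, mul_right_comm, ← coeff_derivative, h0]
    simp
  · have hle := natDegree_derivative_le q
    rw [coeff_derivative, mul_left_comm, ← pow_add, mul_right_comm]
    congr 2
    omega

theorem separable_scaleRoots {F : Type*} [Field F] {q : F[X]} (hq : q.Separable) {s : F}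
    (hs : s ≠ 0) : (q.scaleRoots s).Separable := by
  rw [Separable, derivative_scaleRoots]
  exact (isCoprime_mul_unit_left_right (isUnit_C.2 (hs.isUnit.pow _)) _ _).2
    (isCoprime_scaleRoots _ _ s hs.isUnit hq)

theorem isRoot_map_div_of_map_eval_scaleRoots {R F : Type*} [CommRing R] [Field F] {q : R[X]}
    (hq : q.Monic) (φ : R →+* F) {D e : R} (hD : φ D ≠ 0)
    (he : φ ((q.scaleRoots D).eval e) = 0) : (q.map φ).IsRoot (φ e / φ D) := by
  rw [← eval₂_at_apply, ← eval_map, map_scaleRoots _ _ _ (by simp [hq.leadingCoeff]),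
    ← mul_div_cancel₀ (φ e) hD, scaleRoots_eval_mul] at he
  exact (mul_eq_zero.1 he).resolve_left (pow_ne_zero _ hD)

theorem exists_separable_map_of_isUnit {R : Type*} (K : Type*) [CommRing R] [IsDomain R] [Field K]
    [Algebra R K] [IsFractionRing R K] {q : R[X]} (hq : q.Monic)
    (hsep : (q.map (algebraMap R K)).Separable) :
    ∃ D : R, D ≠ 0 ∧ ∀ {S : Type*} [CommRing S] (φ : R →+* S),
      IsUnit (φ D) → (q.map φ).Separable := by
  by_cases hdeg : q.natDegree = 0
  · obtain rfl := eq_one_of_monic_natDegree_zero hq hdeg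
    exact ⟨1, one_ne_zero, fun φ _ => by simp⟩
  have hinj := IsFractionRing.injective R K
  refine ⟨q.resultant (derivative q), fun h0 => ?_, fun φ hD => ?_⟩
  · refine resultant_ne_zero _ _ hsep ?_
    rw [derivative_map, natDegree_map_eq_of_injective hinj, natDegree_map_eq_of_injective hinj,
      resultant_map_map, h0, map_zero]
  · obtain ⟨u, v, -, -, h⟩ := exists_mul_add_mul_eq_C_resultant q (derivative q) le_rfl le_rfl
      (.inl hdeg)
    obtain ⟨s, hs⟩ := hD.exists_left_inv
    refine ⟨C s * u.map φ, C s * v.map φ, ?_⟩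
    have hφ := congrArg (Polynomial.map φ) h
    simp only [Polynomial.map_add, Polynomial.map_mul, map_C] at hφ
    rw [derivative_map, ← C_1, ← hs, C_mul, ← hφ]
    ring

theorem infinite_setOf_derivative_eq_zero (k : Type*) [Field k] :
    {w : k[X] | derivative w = 0}.Infinite := by
  obtain ⟨p, hp⟩ := CharP.exists k
  rcases CharP.char_is_prime_or_zero k p with hprime | rfl
  · refine Set.infinite_of_injective_forall_mem (f := fun m : ℕ => (X ^ (p * m) : k[X]))
      (fun m m' h => ?_) fun m => by simp [derivative_X_pow]
    simpa [hprime.ne_zero] using congrArg natDegree h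
  · have := CharP.charP_to_charZero k
    exact Set.infinite_of_injective_forall_mem (f := fun m : ℕ => (C (m : k) : k[X]))
      (C_injective.comp Nat.cast_injective) fun m => derivative_C

theorem exists_derivative_eval_ne_zero {k : Type*} [Field k] {p : k[X][X]}
    (hp : derivative p ≠ 0) : ∃ w : k[X], derivative (p.eval w) ≠ 0 := by
  obtain ⟨r, chain_rule⟩ : ∃ r : k[X][X], ∀ w : k[X],
      derivative (p.eval w) = r.eval w + (derivative p).eval w * derivative w :=
    ⟨PolynomialModule.equivPolynomial ((derivative' (R := k)).mapCoeffs p), fun w => by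
      rw [← coe_aeval_eq_eval w, PolynomialModule.aeval_equivPolynomial]
      exact (derivative' (R := k)).apply_aeval_eq' derivative' (Algebra.linearMap _ _)
        (fun _ => rfl) w p⟩
  by_contra! h
  have hr : r = 0 := eq_zero_of_infinite_isRoot r <|
    (infinite_setOf_derivative_eq_zero k).mono fun w (hw : derivative w = 0) => by
      simpa [h, hw] using (chain_rule w).symm
  refine hp (eq_zero_of_infinite_isRoot _ ?_)
  refine ((infinite_setOf_derivative_eq_zero k).image (add_left_injective (X : k[X])).injOn).mono ?_
  rintro _ ⟨w, hw : derivative w = 0, rfl⟩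
  have h' := chain_rule (w + X)
  rw [h, hr, eval_zero, zero_add, derivative_add, hw, zero_add, derivative_X, mul_one] at h'
  exact h'.symm

theorem exists_irreducible_dvd_derivative_ne_zero {k : Type*} [Field k] {N : k[X]}
    (hN : derivative N ≠ 0) : ∃ g, g ∣ N ∧ Irreducible g ∧ derivative g ≠ 0 := by
  induction N using UniqueFactorizationMonoid.induction_on_prime with
  | h₁ => simp at hN
  | h₂ x hx =>
    obtain ⟨c, -, rfl⟩ := Polynomial.isUnit_iff.1 hx
    simp at hN
  | h₃ q p _ hp ih =>
    by_cases hp' : derivative p = 0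
    · have hq' : derivative q ≠ 0 := fun hq' => hN (by simp [derivative_mul, hp', hq'])
      obtain ⟨g, hgq, hg⟩ := ih hq'
      exact ⟨g, hgq.mul_left _, hg⟩
    · exact ⟨p, dvd_mul_right _ _, hp.irreducible, hp'⟩

theorem exists_simple_root_of_dvd_eval_scaleRoots {k : Type*} (F : Type*) [Field k] [Field F]
    [IsAlgClosed F] [Algebra k F] {q : k[X][X]} (hq : q.Monic) (hq' : derivative q ≠ 0)
    {D : k[X]} (hD : D ≠ 0) :
    ∃ (e g : k[X]) (a : F), g ∣ (q.scaleRoots D).eval e ∧ IsCoprime D g ∧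
      aeval a g = 0 ∧ aeval a (derivative g) ≠ 0 := by
  -- The values at `1 + D * w` are all coprime to `D`.
  obtain ⟨w, hw⟩ := exists_derivative_eval_ne_zero (p := (q.scaleRoots D).comp (1 + C D * X)) (by
    have hdeg : (1 + C D * X : k[X][X]).natDegree = 1 := by compute_degree!
    have hder : derivative (1 + C D * X : k[X][X]) ≠ 0 := by simpa using hD
    rw [derivative_comp, derivative_scaleRoots]
    refine mul_ne_zero hder fun h0 => ?_
    rcases comp_eq_zero_iff.1 h0 with h0 | ⟨-, h0⟩
    · exact mul_ne_zero (by simpa using fun h => absurd h hD) (scaleRoots_ne_zero hq' D) h0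
    · rw [h0, natDegree_C] at hdeg
      exact zero_ne_one hdeg)
  obtain ⟨g, hgdvd, hg, hg'⟩ := exists_irreducible_dvd_derivative_ne_zero hw
  obtain ⟨a, ha⟩ := IsAlgClosed.exists_aeval_eq_zero F g (degree_pos_of_irreducible hg).ne'
  have he : (q.scaleRoots D).eval (1 + D * w) = ((q.scaleRoots D).comp (1 + C D * X)).eval w := by
    simp [eval_comp]
  have hcop : IsCoprime D ((q.scaleRoots D).eval (1 + D * w)) := by
    have h1 : D ∣ (1 + D * w) ^ q.natDegree - 1 :=
      dvd_trans ⟨w, by ring⟩ (sub_one_dvd_pow_sub_one (1 + D * w) q.natDegree)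
    obtain ⟨v, hv⟩ := (dvd_eval_scaleRoots_sub_pow hq D (1 + D * w)).add h1
    exact ⟨-v, 1, by linear_combination hv⟩
  exact ⟨1 + D * w, g, a, he ▸ hgdvd, hcop.of_isCoprime_of_dvd_right (he ▸ hgdvd), ha,
    ((separable_iff_derivative_ne_zero hg).2 hg').aeval_derivative_ne_zero ha⟩

theorem exists_simple_root_common_of_ne_zero {k : Type*} (F : Type*) [Field k] [Field F]
    [IsAlgClosed F] [Algebra k F] {D : k[X]} (hD : D ≠ 0) :
    ∃ (d c : k[X]) (a b : F),
      (aeval a D ≠ 0 ∧ aeval a d = 0 ∧ aeval a c = 0 ∧ aeval a (derivative c) ≠ 0) ∧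
      (aeval b D ≠ 0 ∧ aeval b d ≠ 0 ∧ aeval b c = 0 ∧ aeval b (derivative c) ≠ 0) := by
  have hX : derivative (X : k[X][X]) ≠ 0 := by simp
  obtain ⟨-, d, a, -, hDd, ha, ha'⟩ := exists_simple_root_of_dvd_eval_scaleRoots F monic_X hX hD
  have hd : d ≠ 0 := by
    rintro rfl
    simp at ha'
  obtain ⟨-, g, b, -, hg, hb, hb'⟩ :=
    exists_simple_root_of_dvd_eval_scaleRoots F monic_X hX (mul_ne_zero hD hd)
  have hDa := (aeval_ne_zero_of_isCoprime hDd a).resolve_right (not_not.2 ha)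
  have hga := (aeval_ne_zero_of_isCoprime hg.of_mul_left_right a).resolve_left (not_not.2 ha)
  have hDdb := (aeval_ne_zero_of_isCoprime hg b).resolve_right (not_not.2 hb)
  rw [map_mul, mul_ne_zero_iff] at hDdb
  exact ⟨d, d * g, a, b, ⟨hDa, ha, by simp [ha], by simp [ha, ha', hga]⟩,
    hDdb.1, hDdb.2, by simp [hb], by simp [hb, hb', hDdb.2]⟩

end Polynomial

section Trinomial

variable {R : Type*} [CommRing R]

/-- The trinomial `X ^ n - d X ^ 2 + c`. When `c` is a uniformizer, reduction modulo it shows a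
single double root if `d` is a unit, so that inertia is generated by a transposition of the roots,
and total ramification if `d` vanishes. -/
noncomputable def swapTrinomial (n : ℕ) (d c : R) : R[X] := X ^ n - C d * X ^ 2 + C c

@[simp]
theorem eval_swapTrinomial (n : ℕ) (d c x : R) :
    (swapTrinomial n d c).eval x = x ^ n - d * x ^ 2 + c := by
  simp [swapTrinomial]

@[simp]
theorem map_swapTrinomial {S : Type*} [CommRing S] (φ : R →+* S) (n : ℕ) (d c : R) :
    (swapTrinomial n d c).map φ = swapTrinomial n (φ d) (φ c) := by
  simp [swapTrinomial]

theorem swapTrinomial_eq_X_pow_add (n : ℕ) (d c : R) :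
    swapTrinomial n d c = X ^ n + (-C d * X ^ 2 + C c) := by
  rw [swapTrinomial]
  ring

theorem monic_swapTrinomial {n : ℕ} (hn : 2 < n) (d c : R) : (swapTrinomial n d c).Monic := by
  rw [swapTrinomial_eq_X_pow_add]
  exact monic_X_pow_add (by compute_degree!)

theorem natDegree_swapTrinomial [Nontrivial R] {n : ℕ} (hn : 2 < n) (d c : R) :
    (swapTrinomial n d c).natDegree = n := by
  rw [swapTrinomial_eq_X_pow_add, natDegree_add_eq_left_of_natDegree_lt, natDegree_X_pow]
  rw [natDegree_X_pow]
  exact lt_of_le_of_lt (by compute_degree) hn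

theorem derivative_swapTrinomial_ne_zero [IsDomain R] {n : ℕ} (hn : 2 < n) (hodd : Odd n)
    {d : R} (hd : d ≠ 0) (c : R) : derivative (swapTrinomial n d c) ≠ 0 := by
  intro h
  obtain ⟨m, rfl⟩ := hodd
  have coeff_eq_zero (i : ℕ) : (swapTrinomial (2 * m + 1) d c).coeff (i + 1) * (i + 1) = 0 := by
    rw [← coeff_derivative, h, coeff_zero]
  have hlead : (2 * m + 1 : R) = 0 := by
    have hne : 2 * m ≠ 1 := by omega
    simpa [swapTrinomial, coeff_X_pow, coeff_C, hne] using coeff_eq_zero (2 * m)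
  have hlin : (2 : R) = 0 := by
    have hne : 1 ≠ 2 * m := by omega
    have h1 := coeff_eq_zero 1
    simp only [swapTrinomial, coeff_add, coeff_sub, coeff_X_pow, coeff_C_mul, coeff_C] at h1
    simpa [hne, hd, one_add_one_eq_two] using h1
  exact one_ne_zero (α := R) (by linear_combination hlead - m * hlin)

end Trinomial

section PowerSeries

variable {F : Type*} [Field F]

theorem mem_span_X_iff {ξ : F⟦X⟧} : ξ ∈ Ideal.span {PowerSeries.X} ↔ constantCoeff ξ = 0 := by
  rw [Ideal.mem_span_singleton, PowerSeries.X_dvd_iff]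

theorem constantCoeff_eval (p : F⟦X⟧[X]) (ξ : F⟦X⟧) :
    constantCoeff (p.eval ξ) = (p.map constantCoeff).eval (constantCoeff ξ) := by
  rw [eval_map, eval₂_at_apply]

theorem surjOn_constantCoeff_simple_roots {p : F⟦X⟧[X]} (hp : p.Monic) :
    Set.SurjOn constantCoeff {ξ : F⟦X⟧ | p.IsRoot ξ}
      {z | (p.map constantCoeff).IsRoot z ∧ (derivative (p.map constantCoeff)).eval z ≠ 0} := by
  rintro z ⟨hz, hz'⟩
  have hensel : HenselianRing F⟦X⟧ (Ideal.span {PowerSeries.X}) := inferInstance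
  obtain ⟨ξ, hξ, hξz⟩ := hensel.is_henselian p hp (PowerSeries.C z)
    (by rw [mem_span_X_iff, constantCoeff_eval, PowerSeries.constantCoeff_C]; exact hz)
    (by
      refine IsUnit.map _ (PowerSeries.isUnit_iff_constantCoeff.2 (isUnit_iff_ne_zero.2 ?_))
      rwa [constantCoeff_eval, PowerSeries.constantCoeff_C, ← derivative_map])
  refine ⟨ξ, hξ, ?_⟩
  rwa [mem_span_X_iff, map_sub, sub_eq_zero, PowerSeries.constantCoeff_C] at hξz

theorem injOn_constantCoeff_simple_roots (p : F⟦X⟧[X]) :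
    Set.InjOn constantCoeff {ξ : F⟦X⟧ | p.IsRoot ξ ∧
      (derivative (p.map constantCoeff)).eval (constantCoeff ξ) ≠ 0} := by
  rintro ξ ⟨hξ, hξ'⟩ η ⟨hη, -⟩ h
  refine IsLocalRing.eq_of_eval_eq_zero_of_not_isUnit_sub hξ hη ?_ ?_
  · rw [PowerSeries.isUnit_iff_constantCoeff, map_sub, h, sub_self]
    exact not_isUnit_zero
  · rw [PowerSeries.isUnit_iff_constantCoeff, constantCoeff_eval, ← derivative_map]
    exact hξ'.isUnit

theorem splits_of_separable_map_constantCoeff [IsAlgClosed F] {p : F⟦X⟧[X]} (hp : p.Monic)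
    (hsep : (p.map constantCoeff).Separable) : p.Splits := by
  classical
  have hpbar := hp.map constantCoeff
  have hsub : (p.map constantCoeff).roots.toFinset ⊆ p.roots.toFinset.image constantCoeff := by
    intro z hz
    have hz : (p.map constantCoeff).IsRoot z :=
      (mem_roots hpbar.ne_zero).1 (Multiset.mem_toFinset.1 hz)
    obtain ⟨ξ, hξ, rfl⟩ := surjOn_constantCoeff_simple_roots hp
      ⟨hz, hsep.eval₂_derivative_ne_zero (RingHom.id F) hz⟩
    exact Finset.mem_image_of_mem _ (Multiset.mem_toFinset.2 ((mem_roots hp.ne_zero).2 hξ))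
  refine splits_iff_card_roots.2 (le_antisymm (card_roots' p) ?_)
  calc p.natDegree = (p.map constantCoeff).natDegree := (hp.natDegree_map _).symm
    _ = (p.map constantCoeff).roots.card := (IsAlgClosed.splits _).natDegree_eq_card_roots
    _ = (p.map constantCoeff).roots.toFinset.card :=
      (Multiset.toFinset_card_of_nodup (nodup_roots hsep)).symm
    _ ≤ (p.roots.toFinset.image constantCoeff).card := Finset.card_le_card hsub
    _ ≤ p.roots.card := Finset.card_image_le.trans (Multiset.toFinset_card_le _)

theorem irreducible_swapTrinomial {n : ℕ} (hn : 2 < n) {δ γ : F⟦X⟧}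
    (hδ : constantCoeff δ = 0) (hγ : constantCoeff γ = 0) (hγ' : PowerSeries.coeff 1 γ ≠ 0) :
    Irreducible (swapTrinomial n δ γ) := by
  have hmonic := monic_swapTrinomial hn δ γ
  have hdeg := natDegree_swapTrinomial hn δ γ
  have heis : (swapTrinomial n δ γ).IsEisensteinAt (Ideal.span {PowerSeries.X}) := by
    refine ⟨?_, fun {i} hi => ?_, ?_⟩
    · rw [hmonic.leadingCoeff, mem_span_X_iff, map_one]
      exact one_ne_zero
    · rw [mem_span_X_iff, ← coeff_map, map_swapTrinomial, hδ, hγ]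
      simp [swapTrinomial, coeff_X_pow, (hdeg ▸ hi).ne]
    · rw [Ideal.span_singleton_pow, Ideal.mem_span_singleton, PowerSeries.X_pow_dvd_iff]
      intro h
      have h1 := h 1 one_lt_two
      exact hγ' (by simpa [swapTrinomial, coeff_X_pow, (zero_lt_two.trans hn).ne] using h1)
  exact heis.irreducible PowerSeries.span_X_isPrime hmonic.isPrimitive (by omega)

theorem constantCoeff_ne_zero_of_isRoot_swapTrinomial {n : ℕ} (hn : 2 < n) {δ γ ξ : F⟦X⟧}
    (hγ : constantCoeff γ = 0) (hγ' : PowerSeries.coeff 1 γ ≠ 0)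
    (hξ : (swapTrinomial n δ γ).IsRoot ξ) :
    constantCoeff ξ ≠ 0 ∧ constantCoeff ξ ^ (n - 2) = constantCoeff δ := by
  rw [IsRoot, eval_swapTrinomial] at hξ
  have hfac : γ = ξ ^ 2 * (δ - ξ ^ (n - 2)) := by
    rw [mul_sub, ← pow_add, Nat.add_sub_cancel' hn.le]
    linear_combination hξ
  have h0 : constantCoeff ξ ≠ 0 := by
    intro h0
    obtain ⟨η, rfl⟩ := PowerSeries.X_dvd_iff.2 h0
    refine hγ' ?_
    rw [hfac, mul_pow, mul_assoc, PowerSeries.coeff_X_pow_mul']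
    simp
  refine ⟨h0, ?_⟩
  have hres := congrArg constantCoeff hfac
  rw [hγ, map_mul, map_pow, map_sub, map_pow] at hres
  exact (sub_eq_zero.1 ((mul_eq_zero.1 hres.symm).resolve_left (pow_ne_zero _ h0))).symm

theorem ncard_setOf_pow_eq [IsAlgClosed F] {m : ℕ} (hm : (m : F) ≠ 0) {d : F} (hd : d ≠ 0) :
    {z : F | z ^ m = d}.ncard = m := by
  have hcard := card_rootSet_eq_natDegree (K := F) (separable_X_pow_sub_C d hm hd)
    (IsAlgClosed.splits _)
  rw [natDegree_X_pow_sub_C, ← Nat.card_eq_fintype_card, Nat.card_coe_set_eq] at hcard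
  have hm0 : 0 < m := Nat.pos_of_ne_zero fun h => hm (by simp [h])
  have hset : (X ^ m - C d).rootSet F = {z : F | z ^ m = d} := by
    ext z
    simp [mem_rootSet, X_pow_sub_C_ne_zero hm0, sub_eq_zero]
  rwa [hset] at hcard

theorem ncard_roots_swapTrinomial [IsAlgClosed F] {n : ℕ} (hn : 2 < n) (hn2 : (n : F) ≠ 2)
    {δ γ : F⟦X⟧} (hδ : constantCoeff δ ≠ 0) (hγ : constantCoeff γ = 0)
    (hγ' : PowerSeries.coeff 1 γ ≠ 0) :
    {ξ | (swapTrinomial n δ γ).IsRoot ξ}.ncard = n - 2 := by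
  set p := swapTrinomial n δ γ
  set S := {z | z ^ (n - 2) = constantCoeff δ}
  have hn2' : ((n - 2 : ℕ) : F) ≠ 0 := by
    rwa [Nat.cast_sub hn.le, Nat.cast_two, sub_ne_zero]
  have hpbar : p.map constantCoeff = swapTrinomial n (constantCoeff δ) 0 := by
    rw [map_swapTrinomial, hγ]
  have hroot (z : F) (hz : z ∈ S) : (p.map constantCoeff).IsRoot z := by
    rw [hpbar, IsRoot, eval_swapTrinomial, ← hz, ← pow_add, Nat.sub_add_cancel hn.le]
    ring
  have hsimple (z : F) (hz : z ∈ S) : (derivative (p.map constantCoeff)).eval z ≠ 0 := by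
    have hz0 : z ≠ 0 := by
      rintro rfl
      exact hδ (by rw [← hz, zero_pow (Nat.sub_ne_zero_of_lt hn)])
    have hval : (derivative (p.map constantCoeff)).eval z = (n - 2 : ℕ) * (z ^ (n - 2) * z) := by
      obtain ⟨m, rfl⟩ := Nat.exists_eq_add_of_lt hn
      have hz : z ^ (2 + m + 1 - 2) = constantCoeff δ := hz
      rw [hpbar, hz]
      simp only [Nat.add_sub_cancel_left, add_assoc] at hz ⊢
      simp only [swapTrinomial, map_zero, add_zero, derivative_sub, derivative_mul, derivative_C,
        derivative_X_pow, zero_mul, zero_add, eval_sub, eval_mul, eval_C, eval_pow, eval_X,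
        Nat.add_succ_sub_one, Nat.cast_add, Nat.cast_ofNat, Nat.cast_one, Nat.add_one_sub_one,
        pow_one]
      linear_combination (m + 3 : F) * z * hz
    rw [hval]
    exact mul_ne_zero hn2' (mul_ne_zero (pow_ne_zero _ hz0) hz0)
  have hmaps : Set.MapsTo constantCoeff {ξ | p.IsRoot ξ} S := fun ξ hξ =>
    (constantCoeff_ne_zero_of_isRoot_swapTrinomial hn hγ hγ' hξ).2
  have hinj : Set.InjOn constantCoeff {ξ | p.IsRoot ξ} :=
    (injOn_constantCoeff_simple_roots p).mono fun ξ hξ => And.intro hξ (hsimple _ (hmaps hξ))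
  have hsurj : Set.SurjOn constantCoeff {ξ | p.IsRoot ξ} S :=
    (surjOn_constantCoeff_simple_roots (monic_swapTrinomial hn δ γ)).mono subset_rfl
      fun z hz => And.intro (hroot z hz) (hsimple z hz)
  rw [← hinj.ncard_image, hsurj.image_eq_of_mapsTo hmaps, ncard_setOf_pow_eq hn2' hδ]

variable {k : Type*} [Field k] [Algebra k F]

/-- The expansion of a polynomial at `a` as a power series in `X - a`. -/
noncomputable def expansion (a : F) : k[X] →+* F⟦X⟧ :=
  coeToPowerSeries.ringHom.comp
    ((taylorAlgHom a).toRingHom.comp (mapRingHom (algebraMap k F)))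

theorem expansion_apply (a : F) (g : k[X]) :
    expansion a g = ((taylor a (g.map (algebraMap k F)) : F[X]) : F⟦X⟧) :=
  rfl

@[simp]
theorem constantCoeff_expansion (a : F) (g : k[X]) : constantCoeff (expansion a g) = aeval a g := by
  rw [expansion_apply, ← PowerSeries.coeff_zero_eq_constantCoeff_apply, coeff_coe,
    taylor_coeff_zero, eval_map_algebraMap]

theorem constantCoeff_comp_expansion (a : F) :
    constantCoeff.comp (expansion a) = (aeval a : k[X] →ₐ[k] F).toRingHom :=
  RingHom.ext (constantCoeff_expansion a)

@[simp]
theorem coeff_one_expansion (a : F) (g : k[X]) :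
    PowerSeries.coeff 1 (expansion a g) = aeval a (derivative g) := by
  rw [expansion_apply, coeff_coe, taylor_coeff_one, derivative_map, eval_map_algebraMap]

@[simp]
theorem expansion_C (a : F) (c : k) : expansion a (C c) = PowerSeries.C (algebraMap k F c) := by
  simp [expansion_apply]

theorem expansion_injective (a : F) : Function.Injective (expansion a : k[X] →+* F⟦X⟧) :=
  fun _ _ h => map_injective _ (algebraMap k F).injective
    (taylor_injective a (coe_injective _ h))

end PowerSeries

theorem exists_prime_gt_cast_ne_two (k : Type*) [Field k] (m : ℕ) :
    ∃ n, n.Prime ∧ m < n ∧ (n : k) ≠ 2 := by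
  obtain ⟨p, hp⟩ := CharP.exists k
  rcases eq_or_ne p 0 with rfl | hp0
  · have := CharP.charP_to_charZero k
    obtain ⟨n, hn, hprime⟩ := Nat.exists_infinite_primes (m + 3)
    exact ⟨n, hprime, by omega, by exact_mod_cast (by omega : n ≠ 2)⟩
  · obtain ⟨n, hprime, hn, hmod⟩ := Nat.exists_prime_gt_modEq_one m hp0
    have h1 : (n : k) = 1 := by exact_mod_cast (CharP.natCast_eq_natCast k p).2 hmod
    refine ⟨n, hprime, hn, fun h2 => one_ne_zero (α := k) ?_⟩
    exact (add_eq_left.1 (one_add_one_eq_two.trans (h2.symm.trans h1)))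

section Place

/-- A place of the `k[X]`-algebra `A` over the point `a`, encoded by the expansions of the elements
of `A` as Puiseux series, extending the Taylor expansion of polynomials at `a`. -/
structure Place (k A : Type*) {F : Type*} [Field k] [Field A] [Algebra k[X] A] [Field F]
    [Algebra k F] (a : F) where
  toRingHom : A →+* AlgebraicClosure (LaurentSeries F)
  map_algebraMap (g : k[X]) : toRingHom (algebraMap k[X] A g) = algebraMap F⟦X⟧ _ (expansion a g)

variable {k F K A : Type*} [Field k] [Field F] [Field K] [Field A] [Algebra k F]
  [Algebra k[X] K] [Algebra K A] [Algebra k[X] A] [IsScalarTower k[X] K A]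
  {a : F}

theorem algebraMap_powerSeries_injective :
    Function.Injective (algebraMap F⟦X⟧ (AlgebraicClosure (LaurentSeries F))) := by
  rw [IsScalarTower.algebraMap_eq F⟦X⟧ (LaurentSeries F)]
  exact (algebraMap (LaurentSeries F) (AlgebraicClosure (LaurentSeries F))).injective.comp
    (IsFractionRing.injective F⟦X⟧ (LaurentSeries F))

theorem exists_ringHom_comp_algebraMap_eq {R Ω : Type*} (A : Type*) [CommRing R] [IsDomain R]
    [Field Ω] [IsAlgClosed Ω] [Field A] [Algebra R A] [Algebra.IsAlgebraic R A] [FaithfulSMul R A]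
    {f : R →+* Ω} (hf : Function.Injective f) : ∃ φ : A →+* Ω, φ.comp (algebraMap R A) = f := by
  let _ : Algebra R Ω := f.toAlgebra
  have : FaithfulSMul R Ω := (faithfulSMul_iff_algebraMap_injective R Ω).2 hf
  exact ⟨(IsAlgClosed.lift : A →ₐ[R] Ω).toRingHom, AlgHom.comp_algebraMap _⟩

theorem exists_isRoot_of_isRoot_map {R S : Type*} [CommRing R] [IsDomain R] [CommRing S]
    [IsDomain S] {p : R[X]} (hp : p.Splits) (hp0 : p ≠ 0) {i : R →+* S}
    (hi : Function.Injective i) {y : S} (hy : (p.map i).IsRoot y) : ∃ x, p.IsRoot x ∧ i x = y := by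
  rw [← mem_roots ((Polynomial.map_ne_zero_iff hi).2 hp0), hp.roots_map_of_injective hi,
    Multiset.mem_map] at hy
  obtain ⟨x, hx, rfl⟩ := hy
  exact ⟨x, (mem_roots hp0).1 hx, rfl⟩

namespace Place

theorem comp_algebraMap (P : Place k A a) :
    P.toRingHom.comp (algebraMap k[X] A) = (algebraMap F⟦X⟧ _).comp (expansion a) :=
  RingHom.ext P.map_algebraMap

theorem toRingHom_aeval (P : Place k A a) {x : A} {ξ : F⟦X⟧}
    (h : P.toRingHom x = algebraMap F⟦X⟧ _ ξ) (r : k[X][X]) :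
    P.toRingHom (aeval x r) = algebraMap F⟦X⟧ _ ((r.map (expansion a)).eval ξ) := by
  rw [aeval_def, hom_eval₂, P.comp_algebraMap, h, ← hom_eval₂, eval_map]

theorem exists_isRoot_of_separable [IsAlgClosed F] (P : Place k A a) {q : k[X][X]} (hq : q.Monic)
    (hsep : (q.map (aeval a : k[X] →ₐ[k] F).toRingHom).Separable) {x : A} (hx : aeval x q = 0) :
    ∃ ξ, (q.map (expansion a)).IsRoot ξ ∧ P.toRingHom x = algebraMap F⟦X⟧ _ ξ := by
  have hsplits : (q.map (expansion a)).Splits :=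
    splits_of_separable_map_constantCoeff (hq.map _) <| by
      rwa [Polynomial.map_map, constantCoeff_comp_expansion]
  obtain ⟨ξ, hξ, h⟩ := exists_isRoot_of_isRoot_map hsplits (hq.map _).ne_zero
    algebraMap_powerSeries_injective (y := P.toRingHom x) <| by
      rw [Polynomial.map_map, ← P.comp_algebraMap, ← Polynomial.map_map]
      exact IsRoot.map (by rwa [IsRoot, eval_map_algebraMap])
  exact ⟨ξ, hξ, h.symm⟩

variable (k K A) in
theorem nonempty [IsFractionRing k[X] K] [Algebra.IsAlgebraic K A] (a : F) :
    Nonempty (Place k A a) := by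
  have : Algebra.IsAlgebraic k[X] A := (IsFractionRing.comap_isAlgebraic_iff (K := K)).2 ‹_›
  have : FaithfulSMul k[X] A := FaithfulSMul.trans k[X] K A
  obtain ⟨φ, hφ⟩ := exists_ringHom_comp_algebraMap_eq A
    (f := (algebraMap F⟦X⟧ (AlgebraicClosure (LaurentSeries F))).comp (expansion (k := k) a))
    (algebraMap_powerSeries_injective.comp (expansion_injective a))
  exact ⟨φ, DFunLike.congr_fun hφ⟩

/-- The conjugate of a place by an automorphism of `A`. -/
noncomputable def comp (P : Place k A a) (h : A ≃ₐ[K] A) : Place k A a where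
  toRingHom := P.toRingHom.comp h
  map_algebraMap g := by
    rw [← P.map_algebraMap, IsScalarTower.algebraMap_apply k[X] K A]
    simp

variable (K) in
theorem exists_toRingHom_eq [IsFractionRing k[X] K] [IsAlgClosed A] [Algebra.IsAlgebraic K A]
    {c : A} (hc : IsIntegral k[X] c) {ξ : F⟦X⟧}
    (hξ : ((minpoly k[X] c).map (expansion a)).IsRoot ξ) :
    ∃ P : Place k A a, P.toRingHom c = algebraMap F⟦X⟧ _ ξ := by
  obtain ⟨P⟩ := nonempty k K A a
  have hmonic := minpoly.monic hc
  obtain ⟨x, hx, hxξ⟩ := exists_isRoot_of_isRoot_map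
    (IsAlgClosed.splits ((minpoly k[X] c).map (algebraMap k[X] A))) (hmonic.map _).ne_zero
    P.toRingHom.injective (y := algebraMap F⟦X⟧ _ ξ) <| by
      rw [Polynomial.map_map, P.comp_algebraMap, ← Polynomial.map_map]
      exact hξ.map
  have hconj : IsConjRoot K c x := isConjRoot_of_aeval_eq_zero hc.tower_top <| by
    rwa [minpoly.isIntegrallyClosed_eq_field_fractions' K hc, aeval_map_algebraMap,
      ← eval_map_algebraMap]
  have : IsAlgClosure K A := ⟨inferInstance, inferInstance⟩
  obtain ⟨h, rfl⟩ := hconj.symm.exists_algEquiv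
  exact ⟨P.comp h, hxξ⟩

variable (K) in
/-- The elements of `A` with unramified expansion at a place, that is, a Laurent series with
coefficients in `F`. -/
noncomputable def laurentField [IsFractionRing k[X] K] (P : Place k A a) : IntermediateField K A :=
  ((algebraMap (LaurentSeries F) (AlgebraicClosure
    (LaurentSeries F))).fieldRange.comap P.toRingHom).toIntermediateField fun x => by
    obtain ⟨g, h, -, rfl⟩ := IsFractionRing.div_surjective (A := k[X]) x
    rw [map_div₀, ← IsScalarTower.algebraMap_apply, ← IsScalarTower.algebraMap_apply]
    refine div_mem ?_ ?_ <;>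
    · rw [Subfield.mem_comap, P.map_algebraMap,
        IsScalarTower.algebraMap_apply F⟦X⟧ (LaurentSeries F)]
      exact ⟨_, rfl⟩

variable [IsFractionRing k[X] K] (P : Place k A a)

theorem mem_laurentField_of_eq {x : A} {ξ : F⟦X⟧} (h : P.toRingHom x = algebraMap F⟦X⟧ _ ξ) :
    x ∈ P.laurentField K :=
  ⟨algebraMap _ _ ξ, by
    rw [← IsScalarTower.algebraMap_apply]
    exact h.symm⟩

theorem mem_laurentField_of_isAlgebraic [IsAlgClosed F] [Algebra k A] [IsScalarTower k k[X] A]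
    {x : A} (hx : IsAlgebraic k x) : x ∈ P.laurentField K := by
  obtain ⟨m, hm0, hm⟩ := hx
  have hcomp : P.toRingHom.comp (algebraMap k A) =
      (algebraMap F⟦X⟧ _).comp (PowerSeries.C.comp (algebraMap k F)) := by
    ext c
    simpa [IsScalarTower.algebraMap_apply k k[X] A] using P.map_algebraMap (C c)
  have hroot : (((m.map (algebraMap k F)).map PowerSeries.C).map (algebraMap F⟦X⟧ _)).IsRoot
      (P.toRingHom x) := by
    rw [Polynomial.map_map, Polynomial.map_map, RingHom.comp_assoc, ← hcomp, ← Polynomial.map_map]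
    exact IsRoot.map (by rwa [IsRoot, eval_map_algebraMap])
  obtain ⟨ξ, -, hξ⟩ := exists_isRoot_of_isRoot_map ((IsAlgClosed.splits _).map PowerSeries.C)
    (by simpa using hm0) algebraMap_powerSeries_injective hroot
  exact P.mem_laurentField_of_eq hξ.symm

theorem image_roots_mem_laurentField [IsAlgClosed A] {q : A[X]} {p : F⟦X⟧[X]} (hp : p.Monic)
    (hq : q.map P.toRingHom = p.map (algebraMap F⟦X⟧ _)) :
    P.toRingHom '' {x | x ∈ P.laurentField K ∧ q.IsRoot x} =
      algebraMap F⟦X⟧ _ '' {ξ | p.IsRoot ξ} := by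
  ext y
  constructor
  · rintro ⟨x, ⟨⟨y, hy : algebraMap _ _ y = P.toRingHom x⟩, hx⟩, rfl⟩
    have hy0 : (p.map (algebraMap F⟦X⟧ (LaurentSeries F))).IsRoot y := by
      rw [← isRoot_map_iff (algebraMap _ (AlgebraicClosure (LaurentSeries F))).injective,
        Polynomial.map_map, ← IsScalarTower.algebraMap_eq, ← hq, hy]
      exact hx.map
    obtain ⟨ξ, rfl⟩ := IsIntegrallyClosed.isIntegral_iff.1
      (⟨p, hp, by rwa [IsRoot, eval_map] at hy0⟩ : IsIntegral F⟦X⟧ y)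
    rw [isRoot_map_iff (IsFractionRing.injective _ _)] at hy0
    exact ⟨ξ, hy0, by rw [← hy, ← IsScalarTower.algebraMap_apply]⟩
  · rintro ⟨ξ, hξ, rfl⟩
    have hq0 : q ≠ 0 := by
      rintro rfl
      exact (hp.map _).ne_zero (by rw [← hq, Polynomial.map_zero])
    obtain ⟨x, hx, hxξ⟩ := exists_isRoot_of_isRoot_map (IsAlgClosed.splits q) hq0
      P.toRingHom.injective (hq ▸ hξ.map)
    exact ⟨x, ⟨P.mem_laurentField_of_eq hxξ, hx⟩, hxξ⟩

end Place

theorem exists_isIntegral_adjoin_simple_eq (R : Type*) {K A : Type*} [CommRing R] [IsDomain R]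
    [Field K] [Field A] [Algebra R K] [IsFractionRing R K] [Algebra K A] [Algebra R A]
    [IsScalarTower R K A] (L : IntermediateField K A) [FiniteDimensional K L]
    [Algebra.IsSeparable K L] :
    ∃ c : A, IsIntegral R c ∧ K⟮c⟯ = L := by
  obtain ⟨x, hx⟩ := Field.exists_primitive_element K L
  have hxL : K⟮(x : A)⟯ = L := by
    rw [← IntermediateField.lift_adjoin_simple, hx, IntermediateField.lift_top]
  have hxalg : IsAlgebraic K (x : A) := (Algebra.IsAlgebraic.isAlgebraic x).algebraMap
  obtain ⟨r, hr, hint⟩ := ((IsFractionRing.isAlgebraic_iff R K A).2 hxalg).exists_integral_multiple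
  refine ⟨r • (x : A), hint, Eq.trans ?_ hxL⟩
  rw [← algebraMap_smul K r (x : A)]
  have hrK : algebraMap R K r ≠ 0 := (map_ne_zero_iff _ (IsFractionRing.injective R K)).2 hr
  refine le_antisymm (IntermediateField.adjoin_simple_le_iff.2
    (IntermediateField.smul_mem _ (IntermediateField.mem_adjoin_simple_self K _)))
    (IntermediateField.adjoin_simple_le_iff.2 ?_)
  have hmem := K⟮algebraMap R K r • (x : A)⟯.smul_mem (x := (algebraMap R K r)⁻¹)
    (IntermediateField.mem_adjoin_simple_self K _)
  rwa [inv_smul_smul₀ hrK] at hmem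

variable (F) in
theorem exists_forall_le_laurentField [IsAlgClosed F] [IsFractionRing k[X] K]
    (L : IntermediateField K A) [FiniteDimensional K L] [Algebra.IsSeparable K L] :
    ∃ D : k[X], D ≠ 0 ∧ ∀ a : F, aeval a D ≠ 0 → ∀ P : Place k A a, L ≤ P.laurentField K := by
  obtain ⟨c, hc, rfl⟩ := exists_isIntegral_adjoin_simple_eq k[X] L
  have hsep : ((minpoly k[X] c).map (algebraMap k[X] K)).Separable := by
    rw [← minpoly.isIntegrallyClosed_eq_field_fractions K A hc]
    exact (IntermediateField.isSeparable_adjoin_simple_iff_isSeparable K A).1 inferInstance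
  obtain ⟨D, hD, hDsep⟩ := exists_separable_map_of_isUnit K (minpoly.monic hc) hsep
  refine ⟨D, hD, fun a ha P => IntermediateField.adjoin_simple_le_iff.2 ?_⟩
  obtain ⟨ξ, -, hξ⟩ := P.exists_isRoot_of_separable (minpoly.monic hc)
    (hDsep (aeval a).toRingHom ha.isUnit) (minpoly.aeval _ _)
  exact P.mem_laurentField_of_eq hξ

namespace Place

variable [IsFractionRing k[X] K] (P : Place k A a) {n : ℕ} {d c : A} {δ γ : F⟦X⟧}

theorem ncard_roots_swapTrinomial [IsAlgClosed F] [IsAlgClosed A] (hn : 2 < n) (hn2 : (n : F) ≠ 2)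
    (hd : P.toRingHom d = algebraMap F⟦X⟧ _ δ) (hc : P.toRingHom c = algebraMap F⟦X⟧ _ γ)
    (hδ : constantCoeff δ ≠ 0) (hγ : constantCoeff γ = 0) (hγ' : PowerSeries.coeff 1 γ ≠ 0) :
    {x | x ∈ P.laurentField K ∧ (swapTrinomial n d c).IsRoot x}.ncard = n - 2 := by
  rw [← P.toRingHom.injective.injOn.ncard_image,
    P.image_roots_mem_laurentField (monic_swapTrinomial hn δ γ) (by simp [hd, hc]),
    algebraMap_powerSeries_injective.injOn.ncard_image,
    _root_.ncard_roots_swapTrinomial hn hn2 hδ hγ hγ']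

theorem not_isRoot_swapTrinomial [IsAlgClosed A] (hn : 2 < n)
    (hd : P.toRingHom d = algebraMap F⟦X⟧ _ δ) (hc : P.toRingHom c = algebraMap F⟦X⟧ _ γ)
    (hδ : constantCoeff δ = 0) (hγ : constantCoeff γ = 0) (hγ' : PowerSeries.coeff 1 γ ≠ 0)
    {x : A} (hx : x ∈ P.laurentField K) : ¬ (swapTrinomial n d c).IsRoot x := by
  intro hroot
  obtain ⟨ξ, hξ, -⟩ := (P.image_roots_mem_laurentField (K := K) (q := swapTrinomial n d c)
    (monic_swapTrinomial hn δ γ) (by simp [hd, hc])).subset (Set.mem_image_of_mem _ ⟨hx, hroot⟩)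
  obtain ⟨hξ0, hξ1⟩ := constantCoeff_ne_zero_of_isRoot_swapTrinomial hn hγ hγ' hξ
  exact pow_ne_zero _ hξ0 (hξ1.trans hδ)

variable (K) in
theorem exists_ringHom_laurentSeries : ∃ ψ : P.laurentField K →+* LaurentSeries F,
    ∀ x, algebraMap _ (AlgebraicClosure (LaurentSeries F)) (ψ x) = P.toRingHom x := by
  let j := algebraMap (LaurentSeries F) (AlgebraicClosure (LaurentSeries F))
  let i := (P.toRingHom.comp (P.laurentField K).val.toRingHom).codRestrict j.fieldRange fun x => x.2
  refine ⟨j.rangeRestrictFieldEquiv.symm.toRingHom.comp i, fun x => ?_⟩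
  exact congrArg Subtype.val (j.rangeRestrictFieldEquiv.apply_symm_apply _)

theorem irreducible_swapTrinomial (hn : 2 < n) {d c : k[X]} (hd : aeval a d = 0)
    (hc : aeval a c = 0) (hc' : aeval a (derivative c) ≠ 0) {B : IntermediateField K A}
    (hB : B ≤ P.laurentField K) :
    Irreducible (swapTrinomial n (algebraMap k[X] B d) (algebraMap k[X] B c)) := by
  have hmonic := monic_swapTrinomial hn (expansion a d) (expansion a c)
  have hirr : Irreducible ((swapTrinomial n (expansion a d) (expansion a c)).map
      (algebraMap F⟦X⟧ (LaurentSeries F))) :=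
    (hmonic.irreducible_iff_irreducible_map_fraction_map).1
      (_root_.irreducible_swapTrinomial hn (by simpa) (by simpa) (by simpa))
  obtain ⟨ψ, hψ⟩ := P.exists_ringHom_laurentSeries K
  have hψ_algebraMap (g : k[X]) : ψ (IntermediateField.inclusion hB (algebraMap k[X] B g)) =
      algebraMap F⟦X⟧ _ (expansion a g) := by
    apply (algebraMap (LaurentSeries F) (AlgebraicClosure (LaurentSeries F))).injective
    rw [hψ, ← IsScalarTower.algebraMap_apply, ← P.map_algebraMap]
    rfl
  refine (monic_swapTrinomial hn _ _).irreducible_of_irreducible_map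
    (ψ.comp (IntermediateField.inclusion hB).toRingHom) _ ?_
  rw [map_swapTrinomial] at hirr ⊢
  rwa [← hψ_algebraMap, ← hψ_algebraMap] at hirr

end Place

end Place

section Galois

variable {K A : Type*} [Field K] [Field A] [Algebra K A]

theorem forall_mem_adjoin_simple_apply_eq_iff {c : A} {τ : A ≃ₐ[K] A} :
    (∀ x ∈ K⟮c⟯, τ x = x) ↔ τ c = c :=
  (IntermediateField.forall_mem_adjoin_smul_eq_self_iff K τ).trans (by simp)

theorem isSwap_of_ncard_eq_two {X : Type*} [DecidableEq X] [Finite X] {π : Equiv.Perm X} {s : Set X}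
    (hs : s.ncard = 2) (hπs : ∀ x ∉ s, π x = x) (hπ : π ≠ 1) : π.IsSwap := by
  have := Fintype.ofFinite X
  refine Equiv.Perm.card_support_eq_two.1 (le_antisymm ?_
    (Equiv.Perm.two_le_card_support_of_ne_one hπ))
  rw [← hs, ← Set.ncard_coe_finset]
  refine Set.ncard_le_ncard (fun x hx => ?_)
  by_contra hxs
  exact Equiv.Perm.mem_support.1 hx (hπs x hxs)

variable [IsAlgClosed A] [Algebra.IsAlgebraic K A]

theorem exists_mem_fixingSubgroup_of_isConjRoot {B : IntermediateField K A} {x y : A}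
    (h : IsConjRoot B x y) : ∃ σ ∈ B.fixingSubgroup, σ x = y := by
  have : IsAlgClosure B A := ⟨inferInstance, inferInstance⟩
  obtain ⟨σ, hσ⟩ := h.symm.exists_algEquiv
  exact ⟨σ.restrictScalars K, fun b => σ.commutes b, hσ⟩

theorem exists_mem_fixingSubgroup_apply_eq_of_irreducible {B : IntermediateField K A} {f : B[X]}
    (hf : Irreducible f) {x y : A} (hx : aeval x f = 0) (hy : aeval y f = 0) :
    ∃ σ ∈ B.fixingSubgroup, σ x = y :=
  exists_mem_fixingSubgroup_of_isConjRoot <|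
    (minpoly.eq_of_irreducible hf hx).symm.trans (minpoly.eq_of_irreducible hf hy)

theorem exists_mem_fixingSubgroup_apply_ne {B : IntermediateField K A} {x : A}
    (hx : IsSeparable K x) (hxB : x ∉ B) : ∃ σ ∈ B.fixingSubgroup, σ x ≠ x := by
  obtain ⟨y, hxy, hconj⟩ := (notMem_iff_exists_ne_and_isConjRoot
    (IsSeparable.tower_top B hx) (IsAlgClosed.splits _)).1 fun h => hxB <| by
      obtain ⟨b, rfl⟩ := Algebra.mem_bot.1 h
      exact b.2
  obtain ⟨σ, hσ, rfl⟩ := exists_mem_fixingSubgroup_of_isConjRoot hconj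
  exact ⟨σ, hσ, hxy.symm⟩

theorem inf_le_of_forall_exists_fixingSubgroup {L E C : IntermediateField K A}
    [Algebra.IsSeparable K E] (h : ∀ τ ∈ L.fixingSubgroup, ∃ σ ∈ C.fixingSubgroup,
      σ⁻¹ * τ ∈ E.fixingSubgroup) : E ⊓ C ≤ L := by
  rintro x ⟨hxE, hxC⟩
  by_contra hxL
  obtain ⟨τ, hτ, hτx⟩ := exists_mem_fixingSubgroup_apply_ne
    (IntermediateField.isSeparable_of_mem_isSeparable K A hxE) hxL
  obtain ⟨σ, hσ, hστ⟩ := h τ hτ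
  have hστx : σ.symm (τ x) = x := (IntermediateField.mem_fixingSubgroup_iff _ _).1 hστ x hxE
  exact hτx (((AlgEquiv.symm_apply_eq σ).1 hστx).trans (hσ ⟨x, hxC⟩))

theorem exists_mem_fixingSubgroup_toPermHom_eq {f : K[X]} (hsep : f.Separable)
    (hprime : f.natDegree.Prime) {C B : IntermediateField K A} (hCB : C ≤ B)
    (hirr : Irreducible (f.map (algebraMap K C))) (hB : (f.rootSet A \ B).ncard = 2)
    (π : Equiv.Perm (f.rootSet A)) :
    ∃ σ ∈ C.fixingSubgroup, MulAction.toPermHom (A ≃ₐ[K] A) (f.rootSet A) σ = π := by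
  classical
  let H := C.fixingSubgroup.map (MulAction.toPermHom (A ≃ₐ[K] A) (f.rootSet A))
  suffices hH : H = ⊤ from Subgroup.mem_map.1 (hH ▸ Subgroup.mem_top π : π ∈ H)
  have hroot (x : f.rootSet A) : aeval (x : A) (f.map (algebraMap K C)) = 0 := by
    rw [aeval_map_algebraMap, aeval_eq_zero_of_mem_rootSet x.2]
  have htrans : MulAction.IsPretransitive H (f.rootSet A) := ⟨fun x y => by
    obtain ⟨σ, hσ, hσx⟩ :=
      exists_mem_fixingSubgroup_apply_eq_of_irreducible hirr (hroot x) (hroot y)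
    exact ⟨⟨_, Subgroup.mem_map_of_mem _ hσ⟩, Subtype.ext hσx⟩⟩
  have hprim : MulAction.IsPreprimitive H (f.rootSet A) := .of_prime_card <| by
    rwa [Nat.card_eq_fintype_card, card_rootSet_eq_natDegree hsep (IsAlgClosed.splits _)]
  obtain ⟨x, hx, hxB⟩ : (f.rootSet A \ B).Nonempty := Set.nonempty_of_ncard_ne_zero (by simp [hB])
  obtain ⟨σ, hσ, hσx⟩ := exists_mem_fixingSubgroup_apply_ne
    (hsep.of_dvd (minpoly.dvd K x (aeval_eq_zero_of_mem_rootSet hx))) hxB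
  refine Equiv.Perm.subgroup_eq_top_of_isPreprimitive_of_isSwap_mem hprim
    (MulAction.toPermHom _ _ σ)
    (isSwap_of_ncard_eq_two (s := {y : f.rootSet A | (y : A) ∉ B}) ?_ (fun y hy => ?_) fun h => ?_)
    (Subgroup.mem_map_of_mem _ (IntermediateField.fixingSubgroup_le hCB hσ))
  · rw [← hB, ← Subtype.val_injective.injOn.ncard_image]
    congr 1
    ext y
    simp [and_comm]
  · exact Subtype.ext (hσ ⟨y, not_not.1 hy⟩)
  · exact hσx (congrArg Subtype.val (Equiv.Perm.congr_fun h ⟨x, hx⟩))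

end Galois

section Symmetric

variable {k K A : Type*} [Field k] [Field K] [Field A] [Algebra k[X] K] [IsFractionRing k[X] K]
  [Algebra K A] [Algebra k[X] A] [IsScalarTower k[X] K A] [Algebra k A] [IsScalarTower k k[X] A]
  [IsAlgClosed A] [Algebra.IsAlgebraic K A]

theorem separable_swapTrinomial_of_irreducible {n : ℕ} {d c : K} (hn : 2 < n) (hodd : Odd n)
    (hd : d ≠ 0) (h : Irreducible (swapTrinomial n d c)) : (swapTrinomial n d c).Separable :=
  (separable_iff_derivative_ne_zero h).2 (derivative_swapTrinomial_ne_zero hn hodd hd c)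

omit [IsFractionRing k[X] K] [IsAlgClosed A] [Algebra.IsAlgebraic K A] [Algebra k A]
  [IsScalarTower k k[X] A] in
theorem rootSet_swapTrinomial {n : ℕ} (hn : 2 < n) (d c : k[X]) :
    (swapTrinomial n (algebraMap k[X] K d) (algebraMap k[X] K c)).rootSet A =
      {x | (swapTrinomial n (algebraMap k[X] A d) (algebraMap k[X] A c)).IsRoot x} := by
  ext x
  rw [mem_rootSet, and_iff_right (monic_swapTrinomial hn _ _).ne_zero, ← eval_map_algebraMap,
    map_swapTrinomial, ← IsScalarTower.algebraMap_apply, ← IsScalarTower.algebraMap_apply]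
  rfl

omit [Algebra.IsAlgebraic K A] [Algebra k A] [IsScalarTower k k[X] A] in
theorem Place.ncard_rootSet_swapTrinomial_sdiff {F : Type*} [Field F] [IsAlgClosed F] [Algebra k F]
    {b : F} (Q : Place k A b) {n : ℕ} (hn : 2 < n) (hn2 : (n : F) ≠ 2) {d c : k[X]}
    (hsep : (swapTrinomial n (algebraMap k[X] K d) (algebraMap k[X] K c)).Separable)
    (hd : aeval b d ≠ 0) (hc : aeval b c = 0) (hc' : aeval b (derivative c) ≠ 0) :
    ((swapTrinomial n (algebraMap k[X] K d) (algebraMap k[X] K c)).rootSet A \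
      Q.laurentField K).ncard = 2 := by
  set S := (swapTrinomial n (algebraMap k[X] K d) (algebraMap k[X] K c)).rootSet A with hS
  have hcard : S.ncard = n := by
    rw [← Nat.card_coe_set_eq, Nat.card_eq_fintype_card,
      card_rootSet_eq_natDegree hsep (IsAlgClosed.splits _), natDegree_swapTrinomial hn]
  have hinter : (S ∩ Q.laurentField K).ncard = n - 2 := by
    rw [← Q.ncard_roots_swapTrinomial (K := K) hn hn2 (Q.map_algebraMap d) (Q.map_algebraMap c)
      (by simpa) (by simpa) (by simpa), hS, rootSet_swapTrinomial hn, Set.inter_comm]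
    rfl
  have hadd := Set.ncard_inter_add_ncard_sdiff_eq_ncard S (Q.laurentField K)
    ((swapTrinomial n (algebraMap k[X] K d) (algebraMap k[X] K c)).rootSet_finite A)
  omega

theorem exists_separable_forall_perm_exists_fixingSubgroup (L : IntermediateField K A)
    [FiniteDimensional K L] [Algebra.IsSeparable K L] (m : ℕ) :
    ∃ f : K[X], f.Separable ∧ m ≤ f.natDegree ∧ ∀ π : Equiv.Perm (f.rootSet A),
      ∃ σ ∈ (L ⊔ IntermediateField.adjoin K {x | IsAlgebraic k x}).fixingSubgroup,
        MulAction.toPermHom (A ≃ₐ[K] A) (f.rootSet A) σ = π := by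
  let F := AlgebraicClosure k
  obtain ⟨D, hD, hDL⟩ := exists_forall_le_laurentField (k := k) F L
  obtain ⟨n, hprime, hmn, hn2⟩ := exists_prime_gt_cast_ne_two F (max m 2)
  have hn : 2 < n := (le_max_right m 2).trans_lt hmn
  obtain ⟨d, c, a, b, ⟨hDa, hda, hca, hca'⟩, hDb, hdb, hcb, hcb'⟩ :=
    exists_simple_root_common_of_ne_zero F hD
  obtain ⟨P⟩ := Place.nonempty k K A a
  obtain ⟨Q⟩ := Place.nonempty k K A b
  have le_laurentField {z : F} (R : Place k A z) (hz : aeval z D ≠ 0) :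
      L ⊔ IntermediateField.adjoin K {x | IsAlgebraic k x} ≤ R.laurentField K :=
    sup_le (hDL z hz R)
      (IntermediateField.adjoin_le_iff.2 fun _ => R.mem_laurentField_of_isAlgebraic)
  have hirr {B : IntermediateField K A} (hB : B ≤ P.laurentField K) :
      Irreducible ((swapTrinomial n (algebraMap k[X] K d) (algebraMap k[X] K c)).map
        (algebraMap K B)) := by
    have := P.irreducible_swapTrinomial hn hda hca hca' hB
    rwa [map_swapTrinomial, ← IsScalarTower.algebraMap_apply, ← IsScalarTower.algebraMap_apply]
  have hd : algebraMap k[X] K d ≠ 0 := by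
    rw [map_ne_zero_iff _ (IsFractionRing.injective _ _)]
    rintro rfl
    simp at hdb
  have hsep := separable_swapTrinomial_of_irreducible hn (hprime.odd_of_ne_two hn.ne') hd
    ((monic_swapTrinomial hn _ _).irreducible_of_irreducible_map _ _ (hirr bot_le))
  refine ⟨_, hsep, ?_, fun π => exists_mem_fixingSubgroup_toPermHom_eq hsep ?_
    (le_laurentField Q hDb) (hirr (le_laurentField P hDa)) ?_ π⟩
  · rw [natDegree_swapTrinomial hn]
    exact (le_max_left m 2).trans hmn.le
  · rwa [natDegree_swapTrinomial hn]
  · exact Q.ncard_rootSet_swapTrinomial_sdiff hn hn2 hsep (by simpa) (by simpa) (by simpa)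

end Symmetric

section Embedding

variable {K A : Type*} [Field K] [Field A] [Algebra K A]

theorem mem_fixingSubgroup_sup_adjoin_rootSet {L : IntermediateField K A} {f : K[X]}
    {σ : A ≃ₐ[K] A} :
    σ ∈ (L ⊔ IntermediateField.adjoin K (f.rootSet A)).fixingSubgroup ↔
      σ ∈ L.fixingSubgroup ∧ MulAction.toPermHom (A ≃ₐ[K] A) (f.rootSet A) σ = 1 := by
  rw [IntermediateField.fixingSubgroup_sup, Subgroup.mem_inf, Equiv.ext_iff]
  refine and_congr_right' ?_
  simp only [IntermediateField.mem_fixingSubgroup_iff, ← AlgEquiv.smul_def,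
    IntermediateField.forall_mem_adjoin_smul_eq_self_iff, Subtype.forall, Subtype.ext_iff]
  rfl

theorem isGalois_adjoin_rootSet {f : K[X]} (hf : f.Separable)
    (hsplits : (f.map (algebraMap K A)).Splits) :
    IsGalois K (IntermediateField.adjoin K (f.rootSet A)) :=
  have := IntermediateField.adjoin_rootSet_isSplittingField hsplits
  .of_separable_splitting_field hf

theorem exists_injective_monoidHom_perm {G X : Type*} [Group G] [Finite G] [Finite X]
    (h : Nat.card G ≤ Nat.card X) : ∃ ε : G →* Equiv.Perm X, Function.Injective ε := by
  have := Fintype.ofFinite G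
  have := Fintype.ofFinite X
  rw [Nat.card_eq_fintype_card, Nat.card_eq_fintype_card] at h
  obtain ⟨ι⟩ := Function.Embedding.nonempty_of_card_le h
  exact ⟨(Equiv.Perm.viaEmbeddingHom ι).comp (MulAction.toPermHom G G),
    (Equiv.Perm.viaEmbeddingHom_injective ι).comp MulAction.toPerm_injective⟩

theorem exists_injective_monoidHom_restrict [Normal K A] {L : IntermediateField K A} [Normal K L]
    {f : K[X]} [Normal K ↥(L ⊔ IntermediateField.adjoin K (f.rootSet A))]
    (hf : ∀ π : Equiv.Perm (f.rootSet A), ∃ σ ∈ L.fixingSubgroup,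
      MulAction.toPermHom (A ≃ₐ[K] A) (f.rootSet A) σ = π)
    {G : Type*} [Group G] (α : G →* (L ≃ₐ[K] L)) {ε : G →* Equiv.Perm (f.rootSet A)}
    (hε : Function.Injective ε) :
    ∃ ψ : G →* (↥(L ⊔ IntermediateField.adjoin K (f.rootSet A)) ≃ₐ[K]
        ↥(L ⊔ IntermediateField.adjoin K (f.rootSet A))),
      Function.Injective ψ ∧
        ∀ g (x : L), (ψ g (IntermediateField.inclusion le_sup_left x) : A) = α g x := by
  set Ω := L ⊔ IntermediateField.adjoin K (f.rootSet A)
  let ρ := (AlgEquiv.restrictNormalHom (F := K) (K₁ := A) L).prod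
    (MulAction.toPermHom (A ≃ₐ[K] A) (f.rootSet A))
  let r := AlgEquiv.restrictNormalHom (F := K) (K₁ := A) Ω
  have hρr : ρ.ker = r.ker := by
    ext σ
    rw [Ω.restrictNormalHom_ker, mem_fixingSubgroup_sup_adjoin_rootSet, MonoidHom.ker_prod,
      Subgroup.mem_inf, L.restrictNormalHom_ker]
    rfl
  have hρ : Function.Surjective ρ := by
    rintro ⟨s, π⟩
    obtain ⟨σ, rfl⟩ := AlgEquiv.restrictNormalHom_surjective A s
    obtain ⟨τ, hτ, hτπ⟩ := hf (π * (MulAction.toPermHom _ _ σ)⁻¹)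
    rw [← L.restrictNormalHom_ker] at hτ
    have hτL : AlgEquiv.restrictNormalHom L τ = 1 := hτ
    refine ⟨τ * σ, (map_mul ρ τ σ).trans (Prod.ext ?_ ?_)⟩
    · simp [ρ, hτL]
    · simp [ρ, hτπ]
  let χ := ρ.liftOfSurjective hρ ⟨r, hρr.le⟩
  have hχ (σ : A ≃ₐ[K] A) : χ (ρ σ) = r σ := ρ.liftOfRightInverse_comp_apply _ _ ⟨r, _⟩ σ
  have hχ_injective : Function.Injective χ := (injective_iff_map_eq_one χ).2 fun y hy => by
    obtain ⟨σ, rfl⟩ := hρ y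
    exact hρr.ge (MonoidHom.mem_ker.2 ((hχ σ).symm.trans hy))
  refine ⟨χ.comp (α.prod ε), hχ_injective.comp fun g h hgh => hε (congrArg Prod.snd hgh),
    fun g x => ?_⟩
  obtain ⟨σ, hσ⟩ := hρ ((α.prod ε) g)
  have hσα : AlgEquiv.restrictNormalHom L σ = α g := congrArg Prod.fst hσ
  rw [MonoidHom.comp_apply, ← hσ, hχ, ← hσα, AlgEquiv.restrictNormalHom_apply,
    AlgEquiv.restrictNormalHom_apply]
  rfl

theorem sup_adjoin_rootSet_inf_le [IsAlgClosed A] [Algebra.IsAlgebraic K A]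
    {L C : IntermediateField K A} {f : K[X]}
    [Algebra.IsSeparable K ↥(L ⊔ IntermediateField.adjoin K (f.rootSet A))] (hLC : L ≤ C)
    (hf : ∀ π : Equiv.Perm (f.rootSet A), ∃ σ ∈ C.fixingSubgroup,
      MulAction.toPermHom (A ≃ₐ[K] A) (f.rootSet A) σ = π) :
    (L ⊔ IntermediateField.adjoin K (f.rootSet A)) ⊓ C ≤ L := by
  refine inf_le_of_forall_exists_fixingSubgroup fun τ hτ => ?_
  obtain ⟨σ, hσ, hστ⟩ := hf (MulAction.toPermHom _ _ τ)
  exact ⟨σ, hσ, mem_fixingSubgroup_sup_adjoin_rootSet.2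
    ⟨mul_mem (inv_mem (IntermediateField.fixingSubgroup_le hLC hσ)) hτ,
      by rw [map_mul, map_inv, hστ, inv_mul_cancel]⟩⟩

theorem exists_regular_galois_embedding {k : Type*} [Field k] [Algebra k[X] K]
    [IsFractionRing k[X] K] [Algebra k[X] A] [IsScalarTower k[X] K A] [Algebra k A]
    [IsScalarTower k k[X] A] [IsAlgClosed A] [Algebra.IsAlgebraic K A] {G : Type*} [Group G]
    [Finite G] (L : IntermediateField K A) [FiniteDimensional K L] [IsGalois K L]
    (α : G →* (L ≃ₐ[K] L)) :
    ∃ (Ω : IntermediateField K A) (hLΩ : L ≤ Ω), FiniteDimensional K Ω ∧ IsGalois K Ω ∧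
      (∀ x ∈ Ω, IsAlgebraic k x → x ∈ L) ∧ ∃ ψ : G →* (Ω ≃ₐ[K] Ω), Function.Injective ψ ∧
        ∀ g (x : L), (ψ g (IntermediateField.inclusion hLΩ x) : A) = α g x := by
  obtain ⟨f, hsep, hG, hf⟩ :=
    exists_separable_forall_perm_exists_fixingSubgroup (k := k) L (Nat.card G)
  have hsplits := IsAlgClosed.splits (f.map (algebraMap K A))
  have : IsAlgClosure K A := ⟨inferInstance, inferInstance⟩
  have : IsGalois K (IntermediateField.adjoin K (f.rootSet A)) :=
    isGalois_adjoin_rootSet hsep hsplits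
  have : FiniteDimensional K (IntermediateField.adjoin K (f.rootSet A)) :=
    have := IntermediateField.adjoin_rootSet_isSplittingField hsplits
    IsSplittingField.finiteDimensional _ f
  have hΩ : IsGalois K ↥(L ⊔ IntermediateField.adjoin K (f.rootSet A)) := ⟨⟩
  obtain ⟨ε, hε⟩ : ∃ ε : G →* Equiv.Perm (f.rootSet A), Function.Injective ε :=
    exists_injective_monoidHom_perm <| by
      rwa [Nat.card_eq_fintype_card (α := f.rootSet A), card_rootSet_eq_natDegree hsep hsplits]
  have hf' (π : Equiv.Perm (f.rootSet A)) : ∃ σ ∈ L.fixingSubgroup,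
      MulAction.toPermHom (A ≃ₐ[K] A) (f.rootSet A) σ = π := by
    obtain ⟨σ, hσ, hσπ⟩ := hf π
    exact ⟨σ, IntermediateField.fixingSubgroup_le le_sup_left hσ, hσπ⟩
  exact ⟨_, le_sup_left, inferInstance, hΩ,
    fun x hx hxk => sup_adjoin_rootSet_inf_le le_sup_left hf ⟨hx,
      (le_sup_right : _ ≤ L ⊔ _) (IntermediateField.subset_adjoin K {x | IsAlgebraic k x} hxk)⟩,
    exists_injective_monoidHom_restrict hf' α hε⟩

end Embedding

section FixedField

variable {K A : Type*} [Field K] [Field A] [Algebra K A]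

theorem isSeparable_of_isRoot_map {L : IntermediateField K A} [Algebra.IsSeparable K L]
    {p : Polynomial L} (hp : (p.map (algebraMap L A)).Separable) {x : A}
    (hx : (p.map (algebraMap L A)).IsRoot x) : IsSeparable K x :=
  .of_algebra_isSeparable_of_isSeparable K <| ((separable_map _).1 hp).of_dvd <|
    minpoly.dvd L x <| by rwa [← eval_map_algebraMap]

theorem mem_fixingSubgroup_sup_adjoin_simple {L : IntermediateField K A} {x : A} {σ : A ≃ₐ[K] A} :
    σ ∈ (L ⊔ K⟮x⟯).fixingSubgroup ↔ σ ∈ L.fixingSubgroup ∧ σ x = x := by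
  rw [IntermediateField.fixingSubgroup_sup, Subgroup.mem_inf,
    IntermediateField.mem_fixingSubgroup_iff K⟮x⟯, forall_mem_adjoin_simple_apply_eq_iff]

theorem map_sup_adjoin_simple_eq [Normal K A] {Ω : IntermediateField K A} [Normal K Ω]
    {τ : A ≃ₐ[K] A} {θ : A} (hτ : τ θ = θ) : (Ω ⊔ K⟮θ⟯).map τ.toAlgHom = Ω ⊔ K⟮θ⟯ := by
  rw [IntermediateField.map_sup, IntermediateField.normal_iff_forall_map_eq'.1 inferInstance τ,
    IntermediateField.adjoin_map, Set.image_singleton]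
  exact congrArg (fun y => Ω ⊔ K⟮y⟯) hτ

theorem restrictNormalHom_mem_iff_apply_eq {Ω : IntermediateField K A} [FiniteDimensional K Ω]
    [Normal K Ω] {H : Subgroup (Ω ≃ₐ[K] Ω)} {c : A}
    (hc : K⟮c⟯ = IntermediateField.lift (IntermediateField.fixedField H))
    (τ : A ≃ₐ[K] A) : AlgEquiv.restrictNormalHom Ω τ ∈ H ↔ τ c = c := by
  rw [← forall_mem_adjoin_simple_apply_eq_iff, hc, ← IntermediateField.mem_fixingSubgroup_iff]
  nth_rw 1 [← IntermediateField.fixingSubgroup_fixedField H]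
  rw [← Subgroup.mem_comap, ← IntermediateField.map_fixingSubgroup]
  rfl

theorem exists_mulEquiv_apply_inclusion_eq [Normal K A] {Ω : IntermediateField K A} [Normal K Ω]
    {H : Subgroup (Ω ≃ₐ[K] Ω)} {θ : A}
    (h₁ : ∀ τ : A ≃ₐ[K] A, τ θ ∈ Ω ⊔ K⟮θ⟯ → AlgEquiv.restrictNormalHom Ω τ ∈ H ∧ τ θ = θ)
    (h₂ : ∀ s ∈ H, ∃ τ : A ≃ₐ[K] A, AlgEquiv.restrictNormalHom Ω τ = s ∧ τ θ = θ) :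
    ∃ β : (↥(Ω ⊔ K⟮θ⟯) ≃ₐ[K] ↥(Ω ⊔ K⟮θ⟯)) ≃* H, ∀ σ (x : Ω),
      (σ (IntermediateField.inclusion le_sup_left x) : A) = (β σ : Ω ≃ₐ[K] Ω) x := by
  set E := Ω ⊔ K⟮θ⟯
  have hθE : θ ∈ E := (le_sup_right : _ ≤ Ω ⊔ _) (IntermediateField.mem_adjoin_simple_self K θ)
  let _ : Algebra Ω E := (IntermediateField.inclusion le_sup_left).toAlgebra
  have : IsScalarTower K Ω E := .of_algebraMap_eq' rfl
  let r := AlgEquiv.restrictNormalHom (F := K) (K₁ := E) Ω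
  have hr (σ : E ≃ₐ[K] E) (x : Ω) : (r σ x : A) = σ (IntermediateField.inclusion le_sup_left x) :=
    congrArg Subtype.val (σ.restrictNormal_commutes Ω x)
  have r_eq {σ : E ≃ₐ[K] E} {τ : A ≃ₐ[K] A} (h : ∀ x : E, τ x = σ x) :
      AlgEquiv.restrictNormalHom Ω τ = r σ :=
    AlgEquiv.ext fun x => Subtype.ext <| by
      rw [AlgEquiv.restrictNormalHom_apply, hr, ← h]
      rfl
  have exists_extend (σ : E ≃ₐ[K] E) : ∃ τ : A ≃ₐ[K] A, (∀ x : E, τ x = σ x) ∧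
      r σ ∈ H ∧ τ θ = θ := by
    have hτ := σ.liftNormal_commutes A
    have hmem := h₁ (σ.liftNormal A) ((hτ ⟨θ, hθE⟩).symm ▸ (σ ⟨θ, hθE⟩).2)
    exact ⟨σ.liftNormal A, hτ, r_eq hτ ▸ hmem⟩
  have hinj : Function.Injective r := (injective_iff_map_eq_one r).2 fun σ hσ => by
    obtain ⟨τ, hτ, -, hτθ⟩ := exists_extend σ
    have hτE : τ ∈ E.fixingSubgroup := mem_fixingSubgroup_sup_adjoin_simple.2 ⟨by
      rwa [← Ω.restrictNormalHom_ker, MonoidHom.mem_ker, r_eq hτ], hτθ⟩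
    exact AlgEquiv.ext fun x => Subtype.ext ((hτ x).symm.trans (hτE x))
  have hrange : r.range = H := by
    ext s
    refine ⟨?_, fun hs => ?_⟩
    · rintro ⟨σ, rfl⟩
      exact (exists_extend σ).choose_spec.2.1
    · obtain ⟨τ, rfl, hτ⟩ := h₂ s hs
      have hE : E.map τ.toAlgHom = E := map_sup_adjoin_simple_eq hτ
      exact ⟨(IntermediateField.intermediateFieldMap τ E).trans (IntermediateField.equivOfEq hE),
        (r_eq fun _ => rfl).symm⟩
  exact ⟨(MonoidHom.ofInjective hinj).trans (MulEquiv.subgroupCongr hrange),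
    fun σ x => (hr σ x).symm⟩

theorem aeval_algebraMap_mul_mem_adjoin_simple {R : Type*} [CommRing R] [Algebra R K] [Algebra R A]
    [IsScalarTower R K A] (D : R) (c : A) (r : R[X]) : aeval (algebraMap R A D * c) r ∈ K⟮c⟯ := by
  have hDc : algebraMap R A D * c ∈ K⟮c⟯ := by
    rw [← Algebra.smul_def, ← algebraMap_smul K]
    exact K⟮c⟯.smul_mem (IntermediateField.mem_adjoin_simple_self K c)
  rw [← aeval_map_algebraMap K]
  exact IntermediateField.adjoin_simple_le_iff.2 hDc
    (IntermediateField.algebra_adjoin_le_adjoin _ _ (aeval_mem_adjoin_singleton _ _))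

end FixedField

section Subgroup

theorem irreducible_swapTrinomial_three {F : Type*} [Field F] {d c : F}
    (h : ∀ x, ¬ (swapTrinomial 3 d c).IsRoot x) : Irreducible (swapTrinomial 3 d c) := by
  have hmonic : (swapTrinomial 3 d c).Monic := monic_swapTrinomial (by norm_num) d c
  have hdeg : (swapTrinomial 3 d c).natDegree = 3 := natDegree_swapTrinomial (by norm_num) d c
  rw [hmonic.irreducible_iff_roots_eq_zero_of_degree_le_three (by simp [hdeg]) hdeg.le]
  exact Multiset.eq_zero_of_forall_notMem fun x hx => h x (isRoot_of_mem_roots hx)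

theorem eval_divByMonic_X_sub_C_ne_zero_iff {F : Type*} [Field F] {p : F[X]} (hp : p.Separable)
    {x y : F} (hx : p.IsRoot x) (hy : p.IsRoot y) :
    (p /ₘ (X - C x)).eval y ≠ 0 ↔ y = x := by
  have hmul := mul_divByMonic_eq_iff_isRoot.2 hx
  refine ⟨fun h => ?_, ?_⟩
  · rw [IsRoot, ← hmul, eval_mul, mul_eq_zero, or_iff_left h] at hy
    simpa [sub_eq_zero] using hy
  · rintro rfl h
    refine hp.eval₂_derivative_ne_zero (RingHom.id F) hx ?_
    rw [← eval, ← hmul]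
    simp [derivative_mul, h]

variable {k F A : Type*} [Field k] [Field F] [Field A] [Algebra k F] [IsAlgClosed F]
  [Algebra k[X] A]

theorem Place.exists_toRingHom_aeval_divByMonic {a : F} (P : Place k A a) {q : k[X][X]}
    (hq : q.Monic) (hsep : (q.map (aeval a : k[X] →ₐ[k] F).toRingHom).Separable) {D e : k[X]}
    (hD : aeval a D ≠ 0) {c : A} {ξ : F⟦X⟧} (hc : P.toRingHom c = algebraMap F⟦X⟧ _ ξ)
    (hqc : aeval c q = 0) (hξ : aeval a D * constantCoeff ξ = aeval a e) {x : A}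
    (hqx : aeval x q = 0) :
    ∃ δ, P.toRingHom (aeval (algebraMap k[X] A D * x) (q.scaleRoots D /ₘ (X - C e))) =
      algebraMap F⟦X⟧ _ δ ∧ (constantCoeff δ ≠ 0 ↔ x = c) := by
  have isRoot_map {η : F⟦X⟧} (hη : (q.map (expansion a)).IsRoot η) :
      (q.map (aeval a : k[X] →ₐ[k] F).toRingHom).IsRoot (constantCoeff η) := by
    rw [← constantCoeff_comp_expansion, ← Polynomial.map_map]
    exact hη.map
  have isRoot_scaleRoots {η : F⟦X⟧} (hη : (q.map (expansion a)).IsRoot η) :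
      ((q.map (aeval a : k[X] →ₐ[k] F).toRingHom).scaleRoots (aeval a D)).IsRoot
        (aeval a D * constantCoeff η) := by
    rw [IsRoot, scaleRoots_eval_mul, isRoot_map hη, mul_zero]
  obtain ⟨ξ', hqξ, hξ'⟩ := P.exists_isRoot_of_separable hq hsep hqc
  obtain rfl := algebraMap_powerSeries_injective (hc.symm.trans hξ')
  obtain ⟨η, hqη, hη⟩ := P.exists_isRoot_of_separable hq hsep hqx
  refine ⟨_, P.toRingHom_aeval (ξ := expansion a D * η)
    (by rw [map_mul, map_mul, P.map_algebraMap, hη]) _, ?_⟩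
  have hinj : Set.InjOn constantCoeff {η | (q.map (expansion a)).IsRoot η} :=
    (injOn_constantCoeff_simple_roots _).mono fun η hη => And.intro hη <| by
      rw [Polynomial.map_map, constantCoeff_comp_expansion]
      exact hsep.eval₂_derivative_ne_zero (RingHom.id F) (isRoot_map hη)
  calc _ ↔ ((q.map (aeval a : k[X] →ₐ[k] F).toRingHom).scaleRoots (aeval a D) /ₘ
        (X - C (aeval a e))).eval (aeval a D * constantCoeff η) ≠ 0 := by
        rw [constantCoeff_eval, Polynomial.map_map, constantCoeff_comp_expansion,
          map_divByMonic _ (monic_X_sub_C e), map_scaleRoots _ _ _ (by simp [hq.leadingCoeff])]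
        simp
    _ ↔ aeval a D * constantCoeff η = aeval a D * constantCoeff ξ := by
        rw [eval_divByMonic_X_sub_C_ne_zero_iff (separable_scaleRoots hsep hD)
          (hξ ▸ isRoot_scaleRoots hqξ) (isRoot_scaleRoots hqη), hξ]
    _ ↔ x = c := by
        rw [mul_right_inj' hD, hinj.eq_iff hqη hqξ, ← algebraMap_powerSeries_injective.eq_iff, ← hη,
          ← hc, P.toRingHom.injective.eq_iff]

variable {K : Type*} [Field K] [Algebra k[X] K] [IsFractionRing k[X] K] [Algebra K A]
  [IsScalarTower k[X] K A] [IsAlgClosed A] [Algebra.IsAlgebraic K A]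

variable (F) in
theorem exists_constantCoeff_ne_zero_iff (Ω : IntermediateField K A) [FiniteDimensional K Ω]
    [Algebra.IsSeparable K Ω] {c : A} (hc : IsIntegral k[X] c) (hsep : IsSeparable K c) :
    ∃ (a : F) (P : Place k A a) (d : A) (g : k[X]), Ω ≤ P.laurentField K ∧ d ∈ K⟮c⟯ ∧
      aeval a g = 0 ∧ aeval a (derivative g) ≠ 0 ∧ ∀ τ : A ≃ₐ[K] A, ∃ δ,
        P.toRingHom (τ d) = algebraMap F⟦X⟧ _ δ ∧ (constantCoeff δ ≠ 0 ↔ τ c = c) := by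
  set q := minpoly k[X] c
  have hq : q.Monic := minpoly.monic hc
  have hqK : q.map (algebraMap k[X] K) = minpoly K c :=
    (minpoly.isIntegrallyClosed_eq_field_fractions' K hc).symm
  have hq' : derivative q ≠ 0 := fun h => by
    refine (separable_iff_derivative_ne_zero (minpoly.irreducible hc.tower_top)).1 hsep ?_
    rw [← hqK, derivative_map, h, Polynomial.map_zero]
  obtain ⟨D₁, hD₁, hΩ⟩ := exists_forall_le_laurentField (k := k) F Ω
  obtain ⟨D₂, hD₂, hsep_map⟩ := exists_separable_map_of_isUnit K hq (hqK ▸ hsep)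
  obtain ⟨e, g, a, hge, hDg, hga, hga'⟩ :=
    exists_simple_root_of_dvd_eval_scaleRoots F hq hq' (mul_ne_zero hD₁ hD₂)
  have hDa : aeval a (D₁ * D₂) ≠ 0 :=
    (aeval_ne_zero_of_isCoprime hDg a).resolve_right (not_not.2 hga)
  obtain ⟨hD₁a, hD₂a⟩ := mul_ne_zero_iff.1 (map_mul (aeval a) D₁ D₂ ▸ hDa)
  have hsep_a := hsep_map (aeval a : k[X] →ₐ[k] F).toRingHom hD₂a.isUnit
  have hroot := isRoot_map_div_of_map_eval_scaleRoots hq (aeval a : k[X] →ₐ[k] F).toRingHom hDa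
    (zero_dvd_iff.1 (hga ▸ map_dvd (aeval a) hge))
  obtain ⟨ξ, hξ, hξe⟩ : ∃ ξ : F⟦X⟧, (q.map (expansion a)).IsRoot ξ ∧
      aeval a (D₁ * D₂) * constantCoeff ξ = aeval a e := by
    obtain ⟨ξ, hξ, hξe⟩ := surjOn_constantCoeff_simple_roots (hq.map (expansion a))
      (a := aeval a e / aeval a (D₁ * D₂)) <| by
        rw [Polynomial.map_map, constantCoeff_comp_expansion]
        exact ⟨hroot, hsep_a.eval₂_derivative_ne_zero (RingHom.id F) hroot⟩
    exact ⟨ξ, hξ, by rw [hξe, mul_div_cancel₀ _ hDa]⟩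
  obtain ⟨P, hP⟩ := Place.exists_toRingHom_eq K hc hξ
  refine ⟨a, P, aeval (algebraMap k[X] A (D₁ * D₂) * c) (q.scaleRoots (D₁ * D₂) /ₘ (X - C e)), g,
    hΩ a hD₁a P, ?_, hga, hga', fun τ => ?_⟩
  · exact aeval_algebraMap_mul_mem_adjoin_simple _ _ _
  · have map_aeval (x : A) (r : k[X][X]) : τ (aeval x r) = aeval (τ x) r :=
      (aeval_algHom_apply (τ.restrictScalars k[X]) x r).symm
    rw [map_aeval, map_mul, IsScalarTower.algebraMap_apply k[X] K A, τ.commutes,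
      ← IsScalarTower.algebraMap_apply]
    exact P.exists_toRingHom_aeval_divByMonic hq hsep_a hDa hP (minpoly.aeval _ _) hξe
      (by rw [← map_aeval, minpoly.aeval, map_zero])

variable [Algebra k A] [IsScalarTower k k[X] A]

theorem exists_forall_isRoot_swapTrinomial_imp (Ω : IntermediateField K A) [FiniteDimensional K Ω]
    [Algebra.IsSeparable K Ω] {c : A} (hc : IsIntegral k[X] c) (hsep : IsSeparable K c) :
    ∃ (M : IntermediateField K A) (d : A) (g : K) (θ : A),
      Ω ⊔ IntermediateField.adjoin K {x | IsAlgebraic k x} ≤ M ∧ d ∈ K⟮c⟯ ∧ d ≠ 0 ∧ θ ∈ M ∧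
        (swapTrinomial 3 d (algebraMap K A g)).IsRoot θ ∧ ∀ τ : A ≃ₐ[K] A, ∀ x ∈ M,
          (swapTrinomial 3 (τ d) (algebraMap K A g)).IsRoot x → τ c = c ∧ x = θ := by
  obtain ⟨a, P, d, g, hΩ, hdc, hga, hga', hδ⟩ :=
    exists_constantCoeff_ne_zero_iff (AlgebraicClosure k) Ω hc hsep
  have hg : P.toRingHom (algebraMap K A (algebraMap k[X] K g)) =
      algebraMap _ _ (expansion a g) := by
    rw [← IsScalarTower.algebraMap_apply, P.map_algebraMap]
  have hg0 : constantCoeff (expansion a g) = 0 := by rwa [constantCoeff_expansion]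
  have hg1 : PowerSeries.coeff 1 (expansion a g) ≠ 0 := by rwa [coeff_one_expansion]
  obtain ⟨δ, hd, hδ0⟩ : ∃ δ, P.toRingHom d = algebraMap _ _ δ ∧ constantCoeff δ ≠ 0 :=
    (hδ 1).imp fun δ h => ⟨h.1, h.2.2 rfl⟩
  have three_ne_two : ((3 : ℕ) : AlgebraicClosure k) ≠ 2 := fun h =>
    one_ne_zero (α := AlgebraicClosure k) (by linear_combination h)
  obtain ⟨θ, hθ⟩ := Set.ncard_eq_one.1
    (P.ncard_roots_swapTrinomial (K := K) (by norm_num : 2 < 3) three_ne_two hd hg hδ0 hg0 hg1)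
  refine ⟨P.laurentField K, d, algebraMap k[X] K g, θ, sup_le hΩ
    (IntermediateField.adjoin_le_iff.2 fun _ => P.mem_laurentField_of_isAlgebraic), hdc, ?_,
    (hθ.ge rfl).1, (hθ.ge rfl).2, fun τ x hx hroot => ?_⟩
  · rintro rfl
    rw [map_zero, eq_comm, map_eq_zero_iff _ algebraMap_powerSeries_injective] at hd
    exact hδ0 (by rw [hd, map_zero])
  · obtain ⟨ε, hτd, hε⟩ := hδ τ
    have hτc : τ c = c := hε.1 fun hε0 =>
      P.not_isRoot_swapTrinomial (by norm_num) hτd hg hε0 hg0 hg1 hx hroot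
    rw [forall_mem_adjoin_simple_apply_eq_iff.2 hτc d hdc] at hroot
    exact ⟨hτc, hθ.le ⟨hx, hroot⟩⟩

omit [IsFractionRing k[X] K] [IsAlgClosed A] [Algebra.IsAlgebraic K A] in
theorem apply_mem_sup_adjoin_isAlgebraic {Ω : IntermediateField K A} [Normal K Ω]
    (τ : A ≃ₐ[K] A) {x : A} (hx : x ∈ Ω ⊔ IntermediateField.adjoin K {x | IsAlgebraic k x}) :
    τ x ∈ Ω ⊔ IntermediateField.adjoin K {x | IsAlgebraic k x} := by
  refine (?_ : _ ≤ (Ω ⊔ IntermediateField.adjoin K {x | IsAlgebraic k x}).comap τ.toAlgHom) hx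
  refine sup_le (fun y hy => ?_) (IntermediateField.adjoin_le_iff.2 fun y hy => ?_)
  · have hτy := (AlgEquiv.restrictNormalHom Ω τ ⟨y, hy⟩).2
    rw [AlgEquiv.restrictNormalHom_apply] at hτy
    exact (le_sup_left : Ω ≤ _) hτy
  · refine (le_sup_right : _ ≤ Ω ⊔ _) (IntermediateField.subset_adjoin K _ ?_)
    let τk : A ≃ₐ[k] A := (τ.restrictScalars k[X]).restrictScalars k
    exact (hy.algHom τk.toAlgHom : IsAlgebraic k (τ y))

theorem exists_isSeparable_forall_apply_eq {Ω : IntermediateField K A} [FiniteDimensional K Ω]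
    [IsGalois K Ω] {c : A} (hc : IsIntegral k[X] c) (hcΩ : c ∈ Ω) :
    ∃ θ : A, IsSeparable K θ ∧
      (∀ τ : A ≃ₐ[K] A, τ c = c → ∃ σ ∈ (Ω ⊔ IntermediateField.adjoin K
        {x | IsAlgebraic k x}).fixingSubgroup, σ θ = τ θ) ∧
      ∀ τ : A ≃ₐ[K] A, τ θ ∈ Ω ⊔ K⟮θ⟯ → τ c = c ∧ τ θ = θ := by
  by_cases hall : ∀ τ : A ≃ₐ[K] A, τ c = c
  · exact ⟨0, by simpa using isSeparable_algebraMap (F := K) (K := A) 0,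
      fun τ _ => ⟨1, one_mem _, by simp⟩, fun τ _ => ⟨hall τ, map_zero τ⟩⟩
  obtain ⟨τ₀, hτ₀⟩ := not_forall.1 hall
  obtain ⟨M, d, g, θ, hBM, hdc, hd0, hθM, hθ, hM⟩ := exists_forall_isRoot_swapTrinomial_imp (k := k)
    Ω hc (IntermediateField.isSeparable_of_mem_isSeparable K A hcΩ)
  set B := Ω ⊔ IntermediateField.adjoin K {x | IsAlgebraic k x}
  have isRoot_apply (τ : A ≃ₐ[K] A) {x : A} (hx : (swapTrinomial 3 d (algebraMap K A g)).IsRoot x) :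
      (swapTrinomial 3 (τ d) (algebraMap K A g)).IsRoot (τ x) := by
    simpa using hx.map (f := (τ : A →+* A))
  have hdΩ : d ∈ Ω := IntermediateField.adjoin_simple_le_iff.2 hcΩ hdc
  have hdB : d ∈ B := (le_sup_left : Ω ≤ B) hdΩ
  have hirr : Irreducible (swapTrinomial 3 (⟨d, hdB⟩ : B) (algebraMap K B g)) :=
    irreducible_swapTrinomial_three fun x hx => hτ₀ <| And.left <|
      hM τ₀ (τ₀ x) (hBM (apply_mem_sup_adjoin_isAlgebraic τ₀ x.2)) <| isRoot_apply τ₀ <| by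
        rw [← isRoot_map_iff (algebraMap B A).injective, map_swapTrinomial] at hx
        exact hx
  have aeval_eq_zero {x : A} (hx : (swapTrinomial 3 d (algebraMap K A g)).IsRoot x) :
      aeval x (swapTrinomial 3 (⟨d, hdB⟩ : B) (algebraMap K B g)) = 0 := by
    rw [← eval_map_algebraMap, map_swapTrinomial]
    exact hx
  refine ⟨θ, ?_, fun τ hτ => ?_, fun τ hτ => ?_⟩
  · have hsep := separable_swapTrinomial_of_irreducible (by norm_num) (by decide)
      (fun h => hd0 (congrArg Subtype.val h)) hirr
    rw [← separable_map (algebraMap B A), map_swapTrinomial] at hsep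
    exact isSeparable_of_isRoot_map (p := swapTrinomial 3 (⟨d, hdΩ⟩ : Ω) (algebraMap K Ω g))
      (by rwa [map_swapTrinomial]) (by rwa [map_swapTrinomial])
  · have hτθ := isRoot_apply τ hθ
    rw [forall_mem_adjoin_simple_apply_eq_iff.2 hτ d hdc] at hτθ
    exact exists_mem_fixingSubgroup_apply_eq_of_irreducible hirr (aeval_eq_zero hθ)
      (aeval_eq_zero hτθ)
  · have hE : Ω ⊔ K⟮θ⟯ ≤ M := sup_le (le_sup_left.trans hBM)
      (IntermediateField.adjoin_simple_le_iff.2 hθM)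
    exact hM τ (τ θ) (hE hτ) (isRoot_apply τ hθ)

theorem exists_intermediateField_mulEquiv_subgroup (Ω : IntermediateField K A)
    [FiniteDimensional K Ω] [IsGalois K Ω] (H : Subgroup (Ω ≃ₐ[K] Ω)) :
    ∃ (E : IntermediateField K A) (hΩE : Ω ≤ E), FiniteDimensional K E ∧ Algebra.IsSeparable K E ∧
      (∀ x ∈ E, IsAlgebraic k x → x ∈ Ω) ∧ ∃ β : (E ≃ₐ[K] E) ≃* H, ∀ σ (x : Ω),
        (σ (IntermediateField.inclusion hΩE x) : A) = (β σ : Ω ≃ₐ[K] Ω) x := by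
  obtain ⟨c, hc, hcH⟩ := exists_isIntegral_adjoin_simple_eq k[X] (IntermediateField.fixedField H)
  have mem_H_iff := restrictNormalHom_mem_iff_apply_eq (H := H) (c := (c : A)) <| by
    rw [← IntermediateField.lift_adjoin_simple, hcH]
  obtain ⟨θ, hθ, hB, hE⟩ :=
    exists_isSeparable_forall_apply_eq (hc.map (Ω.val.restrictScalars k[X])) c.2
  have : IsAlgClosure K A := ⟨inferInstance, inferInstance⟩
  have : FiniteDimensional K K⟮θ⟯ := IntermediateField.adjoin.finiteDimensional hθ.isIntegral
  have : Algebra.IsSeparable K K⟮θ⟯ :=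
    (IntermediateField.isSeparable_adjoin_simple_iff_isSeparable K A).2 hθ
  refine ⟨Ω ⊔ K⟮θ⟯, le_sup_left, inferInstance, inferInstance, fun x hx hxk => ?_,
    exists_mulEquiv_apply_inclusion_eq (fun τ hτ => ?_) fun s hs => ?_⟩
  · refine inf_le_of_forall_exists_fixingSubgroup (fun τ hτ => ?_) ⟨hx, (le_sup_right : _ ≤ Ω ⊔ _)
      (IntermediateField.subset_adjoin K {x | IsAlgebraic k x} hxk)⟩
    obtain ⟨σ, hσ, hστ⟩ := hB τ (hτ c)
    exact ⟨σ, hσ, mem_fixingSubgroup_sup_adjoin_simple.2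
      ⟨mul_mem (inv_mem (IntermediateField.fixingSubgroup_le le_sup_left hσ)) hτ,
        (AlgEquiv.symm_apply_eq σ).2 hστ.symm⟩⟩
  · rw [mem_H_iff]
    exact hE τ hτ
  · obtain ⟨τ, rfl⟩ := AlgEquiv.restrictNormalHom_surjective A s
    obtain ⟨σ, hσ, hστ⟩ := hB τ ((mem_H_iff τ).1 hs)
    have hσΩ : AlgEquiv.restrictNormalHom Ω σ = 1 := by
      rw [← MonoidHom.mem_ker, Ω.restrictNormalHom_ker]
      exact IntermediateField.fixingSubgroup_le le_sup_left hσ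
    exact ⟨σ⁻¹ * τ, by rw [map_mul, map_inv, hσΩ, inv_one, one_mul],
      (AlgEquiv.symm_apply_eq σ).2 hστ.symm⟩

end Subgroup

theorem statement_1_general {k K A G : Type*} [Field k] [Field K] [Field A] [Algebra k[X] K]
    [IsFractionRing k[X] K] [Algebra K A] [Algebra k[X] A] [IsScalarTower k[X] K A] [Algebra k A]
    [IsScalarTower k k[X] A] [IsAlgClosed A] [Algebra.IsAlgebraic K A] [Group G] [Finite G]
    (L : IntermediateField K A) [FiniteDimensional K L] [IsGalois K L] (α : G →* (L ≃ₐ[K] L)) :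
    ∃ (E : IntermediateField K A) (hLE : L ≤ E), FiniteDimensional K E ∧ Algebra.IsSeparable K E ∧
      (∀ x ∈ E, IsAlgebraic k x → x ∈ L) ∧ ∃ β : (E ≃ₐ[K] E) ≃* G, ∀ (σ : E ≃ₐ[K] E) (x : A)
        (hx : x ∈ L), ((σ ⟨x, hLE hx⟩ : E) : A) = ((α (β σ) ⟨x, hx⟩ : L) : A) := by
  obtain ⟨Ω, hLΩ, _, _, hΩ, ψ, hψ, hψα⟩ := exists_regular_galois_embedding (k := k) L α
  obtain ⟨E, hΩE, hfin, hsep, hE, β, hβ⟩ :=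
    exists_intermediateField_mulEquiv_subgroup (k := k) Ω ψ.range
  let e := MonoidHom.ofInjective hψ
  refine ⟨E, hLΩ.trans hΩE, hfin, hsep, fun x hx hxk => hΩ x (hE x hx hxk) hxk, β.trans e.symm,
    fun σ x hx => (hβ σ ⟨x, hLΩ hx⟩).trans ?_⟩
  have hψβ : ψ (e.symm (β σ)) = β σ := congrArg Subtype.val (e.apply_symm_apply (β σ))
  rw [← hψβ]
  exact hψα _ ⟨x, hx⟩

/-- **The Dèbes–Deschamps conjecture with normality of the solution field waived.**
`L/k(T)` is a finite Galois extension inside a fixed algebraic closure of `RatFunc k`,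
`α : G → Gal(L/k(T))` is a surjective homomorphism admitting a group-theoretic section
`α'`.  Then there are a finite separable extension `E/k(T)` with `L ⊆ E` such that every
element of `E` algebraic over `k` lies in `L` (i.e. `E ∩ k̄ = L ∩ k̄`), and an
isomorphism `β : Aut(E/k(T)) ≃ G` such that every `σ ∈ Aut(E/k(T))` maps `L` onto itself
and `σ|_L = α (β σ)`. -/
theorem statement_1 (k : Type) [Field k] (G : Type) [Group G] [Finite G]
    (L : IntermediateField (RatFunc k) (AlgebraicClosure (RatFunc k)))
    [FiniteDimensional (RatFunc k) L] [IsGalois (RatFunc k) L]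
    (α : G →* (L ≃ₐ[RatFunc k] L)) (hα : Function.Surjective α)
    (α' : (L ≃ₐ[RatFunc k] L) →* G) (hα' : Function.Injective α')
    (hsec : ∀ s : L ≃ₐ[RatFunc k] L, α (α' s) = s) :
    ∃ (E : IntermediateField (RatFunc k) (AlgebraicClosure (RatFunc k)))
      (hLE : L ≤ E),
      FiniteDimensional (RatFunc k) E ∧ Algebra.IsSeparable (RatFunc k) E ∧
      (∀ x : AlgebraicClosure (RatFunc k), x ∈ E → IsAlgebraic k x → x ∈ L) ∧
      ∃ β : (E ≃ₐ[RatFunc k] E) ≃* G,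
        ∀ (σ : E ≃ₐ[RatFunc k] E) (x : AlgebraicClosure (RatFunc k)) (hx : x ∈ L),
          ((σ ⟨x, hLE hx⟩ : E) : AlgebraicClosure (RatFunc k)) =
            ((α (β σ) ⟨x, hx⟩ : L) : AlgebraicClosure (RatFunc k)) :=
  statement_1_general L α
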